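/- arXiv:2511.09577 — 14 statements merged into one kernel-verified Lean document; each statement's English description precedes it below -/
import Mathlib

section
/- Let m ≥ 1, let u be an m×m real symmetric matrix and v an m×m real symmetric positive definite matrix, and set x = u + iv (an m×m complex symmetric matrix). Then the matrix x + iI_m is invertible, and the matrix w = (x − iI_m)(x + iI_m)^{-1} is complex symmetric and satisfies that I_m − w wᴴ is Hermitian positive definite; i.e., the matrix Cayley transformation maps the Siegel upper half space into the Siegel disk. -/
open Matrix
open scoped ComplexOrder

lemma posDef_map_aux {m : ℕ} (v : Matrix (Fin m) (Fin m) ℝ) (hv : v.PosDef) :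
    (v.map ((↑) : ℝ → ℂ)).PosDef := by
  have hT : vᵀ = v := by simpa using hv.isHermitian.eq
  have hs : ∀ i j, v i j = v j i := fun i j => congrFun (congrFun hT j) i
  refine PosDef.of_dotProduct_mulVec_pos ?_ ?_
  · ext i j
    simp [hs i j]
  · intro z hz
    set a : Fin m → ℝ := fun i => (z i).re with ha
    set b : Fin m → ℝ := fun i => (z i).im with hb
    have key : star z ⬝ᵥ (v.map ((↑) : ℝ → ℂ) *ᵥ z)
        = ((a ⬝ᵥ (v *ᵥ a) + b ⬝ᵥ (v *ᵥ b) : ℝ) : ℂ) := by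
      have hab : a ⬝ᵥ (v *ᵥ b) = b ⬝ᵥ (v *ᵥ a) := by
        rw [dotProduct_mulVec, ← mulVec_transpose, hT, dotProduct_comm]
      have hz' : z = fun i => (a i : ℂ) + Complex.I * (b i : ℂ) := by
        funext i
        rw [mul_comm]; exact (Complex.re_add_im (z i)).symm
      have h1 : star z ⬝ᵥ (v.map ((↑) : ℝ → ℂ) *ᵥ z)
        = ((a ⬝ᵥ (v *ᵥ a) + b ⬝ᵥ (v *ᵥ b) : ℝ) : ℂ)
          + Complex.I * ((a ⬝ᵥ (v *ᵥ b) - b ⬝ᵥ (v *ᵥ a) : ℝ) : ℂ) := by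
        rw [hz']
        simp only [dotProduct, mulVec, Finset.mul_sum, Complex.ofReal_add, Complex.ofReal_sub,
          Complex.ofReal_sum, Complex.ofReal_mul, ← Finset.sum_add_distrib,
          ← Finset.sum_sub_distrib]
        refine Finset.sum_congr rfl fun i _ => Finset.sum_congr rfl fun j _ => ?_
        simp only [Pi.star_apply, map_apply, star_add, star_mul', Complex.star_def,
          Complex.conj_ofReal, Complex.conj_I]
        linear_combination (-(b i : ℂ) * v i j * b j) * Complex.I_sq
      rw [h1, hab]; simp
    rw [key]
    have hne : a ≠ 0 ∨ b ≠ 0 := by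
      by_contra! h
      apply hz
      funext i
      exact Complex.ext (congrFun h.1 i) (congrFun h.2 i)
    have pa : 0 ≤ a ⬝ᵥ (v *ᵥ a) := by simpa using hv.posSemidef.dotProduct_mulVec_nonneg a
    have pb : 0 ≤ b ⬝ᵥ (v *ᵥ b) := by simpa using hv.posSemidef.dotProduct_mulVec_nonneg b
    rw [Complex.zero_lt_real]
    rcases hne with h | h
    · have : 0 < a ⬝ᵥ (v *ᵥ a) := by simpa using hv.dotProduct_mulVec_pos h
      linarith
    · have : 0 < b ⬝ᵥ (v *ᵥ b) := by simpa using hv.dotProduct_mulVec_pos h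
      linarith

/-- the matrix Cayley transformation maps the Siegel upper half
space into the Siegel disk. -/
theorem cayley_maps_SH_to_SD (m : ℕ) (hm : 1 ≤ m)
    (u v : Matrix (Fin m) (Fin m) ℝ) (hu : uᵀ = u) (hv : v.PosDef)
    (x : Matrix (Fin m) (Fin m) ℂ)
    (hx : x = u.map ((↑) : ℝ → ℂ) + Complex.I • v.map ((↑) : ℝ → ℂ))
    (w : Matrix (Fin m) (Fin m) ℂ)
    (hw : w = (x - Complex.I • (1 : Matrix (Fin m) (Fin m) ℂ)) *
      (x + Complex.I • (1 : Matrix (Fin m) (Fin m) ℂ))⁻¹) :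
    IsUnit (x + Complex.I • (1 : Matrix (Fin m) (Fin m) ℂ)) ∧
    wᵀ = w ∧
    ((1 : Matrix (Fin m) (Fin m) ℂ) - w * wᴴ).PosDef := by
  have hV := posDef_map_aux v hv
  have hVT : (v.map ((↑) : ℝ → ℂ))ᵀ = v.map ((↑) : ℝ → ℂ) := by
    have hT : vᵀ = v := by simpa using hv.isHermitian.eq
    rw [← transpose_map, hT]
  have hUT : (u.map ((↑) : ℝ → ℂ))ᵀ = u.map ((↑) : ℝ → ℂ) := by
    rw [← transpose_map, hu]
  have hUH : (u.map ((↑) : ℝ → ℂ))ᴴ = u.map ((↑) : ℝ → ℂ) := by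
    conv_rhs => rw [← hUT]
    ext i j
    simp
  generalize u.map ((↑) : ℝ → ℂ) = U at *
  generalize v.map ((↑) : ℝ → ℂ) = V at *
  have hVH : Vᴴ = V := hV.isHermitian.eq
  set M := x + Complex.I • (1 : Matrix (Fin m) (Fin m) ℂ) with hM
  have hMT : Mᵀ = M := by
    rw [hM, hx]; simp [hUT, hVT]
  have hMH : Mᴴ = M - (2 * Complex.I) • (V + 1) := by
    rw [hM, hx]; simp only [conjTranspose_add, conjTranspose_smul, hUH, hVH, conjTranspose_one,
      Complex.star_def, Complex.conj_I]
    module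
  have hP : (V + 1).PosDef := hV.add PosDef.one
  have hunit : IsUnit M := by
    rw [← mulVec_injective_iff_isUnit]
    rw [← coe_mulVecLin, ← LinearMap.ker_eq_bot, LinearMap.ker_eq_bot']
    intro y hy
    rw [mulVecLin_apply] at hy
    by_contra hne
    have h1 : star y ⬝ᵥ (Mᴴ *ᵥ y) = 0 := by
      rw [dotProduct_mulVec, ← star_mulVec, hy]; simp
    rw [hMH, sub_mulVec, hy, smul_mulVec, zero_sub, dotProduct_neg, dotProduct_smul] at h1
    have h2 := hP.dotProduct_mulVec_pos hne
    simp at h1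
    exact h2.ne' h1
  have hdet : IsUnit M.det := (isUnit_iff_isUnit_det M).1 hunit
  have hw' : w = 1 - (2 * Complex.I) • M⁻¹ := by
    have : x - Complex.I • (1 : Matrix (Fin m) (Fin m) ℂ) = M - (2 * Complex.I) • 1 := by
      rw [hM]; module
    rw [hw, this, sub_mul, mul_nonsing_inv _ hdet, smul_mul_assoc, one_mul]
  refine ⟨hunit, ?_, ?_⟩
  · rw [hw', transpose_sub, transpose_smul, transpose_nonsing_inv, hMT, transpose_one]
  · have hN : IsUnit M⁻¹ := by
      rw [isUnit_iff_isUnit_det]; exact isUnit_nonsing_inv_det _ hdet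
    have hNM : M⁻¹ * M = 1 := nonsing_inv_mul _ hdet
    have hNM' : Mᴴ * (M⁻¹)ᴴ = 1 := by rw [← conjTranspose_mul, hNM, conjTranspose_one]
    have key : 1 - w * wᴴ = M⁻¹ * ((4 : ℂ) • V) * star M⁻¹ := by
      have hVeq : (4 : ℂ) • V = (2 * Complex.I) • Mᴴ - (2 * Complex.I) • M - (4 : ℂ) • 1 := by
        rw [hMH, smul_sub, smul_smul,
          show 2 * Complex.I * (2 * Complex.I) = -4 by linear_combination 4 * Complex.I_sq]
        module
      rw [hVeq, hw', star_eq_conjTranspose]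
      have e1 : M⁻¹ * ((2 * Complex.I) • Mᴴ - (2 * Complex.I) • M - (4 : ℂ) • 1) * (M⁻¹)ᴴ
          = (2 * Complex.I) • (M⁻¹ * (Mᴴ * (M⁻¹)ᴴ)) - (2 * Complex.I) • ((M⁻¹ * M) * (M⁻¹)ᴴ)
            - (4 : ℂ) • (M⁻¹ * (M⁻¹)ᴴ) := by
        simp only [mul_sub, sub_mul, mul_smul_comm, smul_mul_assoc, mul_one, mul_assoc]
      rw [e1, hNM, hNM', mul_one, one_mul]
      simp only [conjTranspose_sub, conjTranspose_smul, conjTranspose_one, star_mul',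
        Complex.star_def, Complex.conj_I, map_ofNat, mul_sub, sub_mul, mul_smul_comm,
        smul_mul_assoc, mul_one, one_mul, smul_smul, smul_sub]
      rw [show 2 * -Complex.I * (2 * Complex.I) = 4 by linear_combination (-4) * Complex.I_sq]
      module
    rw [key, IsUnit.posDef_star_right_conjugate_iff hN]
    exact hV.smul (by norm_num)
end

section
/- Let m ≥ 1 and let w be an m×m complex symmetric matrix such that I_m − w wᴴ is Hermitian positive definite. Then I_m − w is invertible, and the matrix x = i(I_m + w)(I_m − w)^{-1} is complex symmetric with real symmetric real part and real symmetric positive definite imaginary part; i.e., the inverse matrix Cayley transformation maps the Siegel disk into the Siegel upper half space. -/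
open Matrix
open scoped ComplexOrder

/-- the inverse matrix Cayley transformation maps the Siegel disk
into the Siegel upper half space. -/
theorem inverse_cayley_maps_SD_to_SH (m : ℕ) (hm : 1 ≤ m)
    (w : Matrix (Fin m) (Fin m) ℂ) (hw : wᵀ = w)
    (hwd : ((1 : Matrix (Fin m) (Fin m) ℂ) - w * wᴴ).PosDef)
    (x : Matrix (Fin m) (Fin m) ℂ)
    (hx : x = Complex.I • (((1 : Matrix (Fin m) (Fin m) ℂ) + w) *
      ((1 : Matrix (Fin m) (Fin m) ℂ) - w)⁻¹)) :
    IsUnit ((1 : Matrix (Fin m) (Fin m) ℂ) - w) ∧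
    xᵀ = x ∧
    ∃ u v : Matrix (Fin m) (Fin m) ℝ, uᵀ = u ∧ v.PosDef ∧
      x = u.map ((↑) : ℝ → ℂ) + Complex.I • v.map ((↑) : ℝ → ℂ) := by
  have hdet : (1 - w).det ≠ 0 := by
    intro h0
    have h1 : ((1 - w)ᴴ).det = 0 := by rw [det_conjTranspose, h0, star_zero]
    obtain ⟨y, hy, hy0⟩ := Matrix.exists_mulVec_eq_zero_iff.mpr h1
    have h2 : wᴴ *ᵥ y = y := by
      rw [conjTranspose_sub, conjTranspose_one, sub_mulVec, one_mulVec, sub_eq_zero] at hy0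
      exact hy0.symm
    have h3 := hwd.dotProduct_mulVec_pos hy
    have h4 : star y ᵥ* w = star y := by
      have := congrArg star h2
      rwa [star_mulVec, conjTranspose_conjTranspose] at this
    rw [sub_mulVec, one_mulVec, ← mulVec_mulVec, h2, dotProduct_sub, dotProduct_mulVec, h4,
      sub_self] at h3
    exact lt_irrefl _ h3
  have hdu : IsUnit (1 - w).det := isUnit_iff_ne_zero.mpr hdet
  have hU : IsUnit (1 - w) := (Matrix.isUnit_iff_isUnit_det _).mpr hdu
  have hBA : (1 - w)⁻¹ * (1 - w) = 1 := Matrix.nonsing_inv_mul _ hdu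
  have hAB : (1 - w) * (1 - w)⁻¹ = 1 := Matrix.mul_nonsing_inv _ hdu
  have hBt : ((1 - w)⁻¹)ᵀ = (1 - w)⁻¹ := by
    rw [transpose_nonsing_inv, transpose_sub, transpose_one, hw]
  have hBU : IsUnit (1 - w)⁻¹ := (Matrix.isUnit_nonsing_inv_iff).mpr hU
  generalize (1 - w)⁻¹ = B at *
  have hcomm : (1 + w) * B = B * (1 + w) := by
    calc (1 + w) * B = (B * (1 - w)) * ((1 + w) * B) := by rw [hBA, one_mul]
      _ = B * (1 + w) * ((1 - w) * B) := by noncomm_ring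
      _ = B * (1 + w) := by rw [hAB, mul_one]
  have hxt : xᵀ = x := by
    rw [hx, transpose_smul, transpose_mul, hBt, transpose_add, transpose_one, hw, hcomm]
  have hABh : (1 - wᴴ) * Bᴴ = 1 := by
    have := congrArg conjTranspose hBA
    simpa [conjTranspose_mul] using this
  have hV : (B * (1 - w * wᴴ) * Bᴴ).PosDef :=
    (Matrix.IsUnit.posDef_star_right_conjugate_iff hBU).mpr hwd
  have hVx : x - xᴴ = (2 * Complex.I) • (B * (1 - w * wᴴ) * Bᴴ) := by
    have e1 : B * (1 + w) = B * (1 + w) * ((1 - wᴴ) * Bᴴ) := by rw [hABh, mul_one]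
    have e2 : (1 + wᴴ) * Bᴴ = B * (1 - w) * ((1 + wᴴ) * Bᴴ) := by rw [hBA, one_mul]
    have e3 : x = Complex.I • (B * (1 + w)) := by rw [hx, hcomm]
    have e4 : xᴴ = (-Complex.I) • ((1 + wᴴ) * Bᴴ) := by
      rw [e3, conjTranspose_smul, conjTranspose_mul]; simp
    rw [e4, e3, neg_smul, sub_neg_eq_add, ← smul_add, mul_comm, mul_smul]
    congr 1
    rw [e1, e2, two_smul]
    noncomm_ring
  have hVe : (x.map Complex.im).map ((↑) : ℝ → ℂ) = B * (1 - w * wᴴ) * Bᴴ := by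
    ext j k
    have h : (x - xᴴ) j k = ((2 * Complex.I) • (B * (1 - w * wᴴ) * Bᴴ)) j k := by rw [hVx]
    have hs : x k j = x j k := congrFun (congrFun hxt j) k
    simp only [Matrix.sub_apply, conjTranspose_apply, Matrix.smul_apply, smul_eq_mul, hs] at h
    simp only [map_apply]
    have h5 : x j k - star (x j k) = 2 * Complex.I * ((x j k).im : ℂ) := by
      apply Complex.ext <;> simp <;> ring
    rw [h5] at h
    exact mul_left_cancel₀ (by simp) h
  refine ⟨hU, hxt, x.map Complex.re, x.map Complex.im, ?_, ?_, ?_⟩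
  · rw [← transpose_map, hxt]
  · rw [← hVe] at hV
    refine Matrix.PosDef.of_dotProduct_mulVec_pos ?_ ?_
    · rw [IsHermitian, conjTranspose_eq_transpose_of_trivial, ← transpose_map, hxt]
    · intro y hy
      have hy2 : (fun i => (y i : ℂ)) ≠ 0 := by
        intro h
        apply hy
        funext i
        have := congrFun h i
        simpa using this
      have h6 := hV.dotProduct_mulVec_pos hy2
      have h7 : star (fun i => (y i : ℂ)) ⬝ᵥ
          ((x.map Complex.im).map ((↑) : ℝ → ℂ) *ᵥ (fun i => (y i : ℂ)))
          = ((star y ⬝ᵥ (x.map Complex.im *ᵥ y) : ℝ) : ℂ) := by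
        simp [dotProduct, mulVec]
      rw [h7] at h6
      exact_mod_cast h6
  · ext j k
    simp [mul_comm Complex.I]
end

section
/- Let m ≥ 1, let s = [[a,b],[c,d]] ∈ Sp_{2m} (with m×m real blocks a, b, c, d regarded as complex matrices), and let x ∈ SH_m. Then the matrix c x + d is invertible, and s[x] := (a x + b)(c x + d)^{-1} again belongs to SH_m, i.e., it is complex symmetric with real symmetric real part and real symmetric positive definite imaginary part. -/
open Matrix

theorem aux_posDef_pos {m : ℕ} (v : Matrix (Fin m) (Fin m) ℝ) (hv : v.PosDef)
    (w : Fin m → ℂ) (hw : w ≠ 0) : 0 < (star w ⬝ᵥ (v.map ((↑) : ℝ → ℂ) *ᵥ w)).re := by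
  have key : (star w ⬝ᵥ (v.map ((↑) : ℝ → ℂ) *ᵥ w)).re =
      star (fun i => (w i).re) ⬝ᵥ (v *ᵥ (fun i => (w i).re)) +
      star (fun i => (w i).im) ⬝ᵥ (v *ᵥ (fun i => (w i).im)) := by
    simp [dotProduct, mulVec, Finset.sum_add_distrib]
  have h1 := hv.posSemidef.dotProduct_mulVec_nonneg (fun i => (w i).re)
  have h2 := hv.posSemidef.dotProduct_mulVec_nonneg (fun i => (w i).im)
  rw [key]
  by_contra hn
  apply hw
  funext i
  apply Complex.ext
  · by_contra hne
    have := hv.dotProduct_mulVec_pos (x := fun i => (w i).re) (fun h0 => hne (congrFun h0 i))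
    linarith
  · by_contra hne
    have := hv.dotProduct_mulVec_pos (x := fun i => (w i).im) (fun h0 => hne (congrFun h0 i))
    linarith

theorem aux_alg {m : ℕ} (A B C D x y : Matrix (Fin m) (Fin m) ℂ)
    (h1 : Aᵀ * C = Cᵀ * A) (h2 : Dᵀ * B = Bᵀ * D) (h3 : Dᵀ * A - Bᵀ * C = 1)
    (h4 : Aᵀ * D - Cᵀ * B = 1) :
    (y * Cᵀ + Dᵀ) * (A * x + B) - (y * Aᵀ + Bᵀ) * (C * x + D) = x - y := by
  have : (y * Cᵀ + Dᵀ) * (A * x + B) - (y * Aᵀ + Bᵀ) * (C * x + D)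
     = y * (Cᵀ * A - Aᵀ * C) * x - y * (Aᵀ * D - Cᵀ * B) + (Dᵀ * A - Bᵀ * C) * x
       + (Dᵀ * B - Bᵀ * D) := by noncomm_ring
  rw [this, h1, h2, h3, h4]; simp; abel

theorem aux_cols {m : ℕ} (a b c d : Matrix (Fin m) (Fin m) ℝ)
    (hs : a * bᵀ = b * aᵀ ∧ c * dᵀ = d * cᵀ ∧ a * dᵀ - b * cᵀ = 1) :
    aᵀ * c = cᵀ * a ∧ dᵀ * b = bᵀ * d ∧ dᵀ * a - bᵀ * c = 1 ∧ aᵀ * d - cᵀ * b = 1 := by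
  obtain ⟨h1, h2, h3⟩ := hs
  have h3' : d * aᵀ - c * bᵀ = 1 := by
    have := congrArg transpose h3
    simpa using this
  have hm : fromBlocks a b c d * fromBlocks dᵀ (-bᵀ) (-cᵀ) aᵀ = 1 := by
    rw [fromBlocks_multiply, ← fromBlocks_one]
    congr 1
    · rw [← h3]; noncomm_ring
    · simp [h1]
    · simp [h2]
    · rw [← h3']; noncomm_ring
  rw [mul_eq_one_comm, fromBlocks_multiply, ← fromBlocks_one, fromBlocks_inj] at hm
  obtain ⟨e1, e2, e3, e4⟩ := hm
  refine ⟨?_, ?_, ?_, ?_⟩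
  · rw [← sub_eq_zero, ← e3]; noncomm_ring
  · rw [← sub_eq_zero, ← e2]; noncomm_ring
  · rw [← e1]; noncomm_ring
  · rw [← e4]; noncomm_ring

/-- the symplectic Möbius action maps the Siegel upper half
space into itself. -/
theorem mobius_maps_SH_to_SH (m : ℕ) (hm : 1 ≤ m)
    (a b c d : Matrix (Fin m) (Fin m) ℝ)
    (hs : a * bᵀ = b * aᵀ ∧ c * dᵀ = d * cᵀ ∧ a * dᵀ - b * cᵀ = 1)
    (u v : Matrix (Fin m) (Fin m) ℝ) (hu : uᵀ = u) (hv : v.PosDef)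
    (x : Matrix (Fin m) (Fin m) ℂ)
    (hx : x = u.map ((↑) : ℝ → ℂ) + Complex.I • v.map ((↑) : ℝ → ℂ)) :
    IsUnit (c.map ((↑) : ℝ → ℂ) * x + d.map ((↑) : ℝ → ℂ)) ∧
    ∃ u' v' : Matrix (Fin m) (Fin m) ℝ, u'ᵀ = u' ∧ v'.PosDef ∧
      (a.map ((↑) : ℝ → ℂ) * x + b.map ((↑) : ℝ → ℂ)) *
        (c.map ((↑) : ℝ → ℂ) * x + d.map ((↑) : ℝ → ℂ))⁻¹
      = u'.map ((↑) : ℝ → ℂ) + Complex.I • v'.map ((↑) : ℝ → ℂ) := by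
  obtain ⟨e1, e2, e3, e4⟩ := aux_cols a b c d hs
  have hvt : vᵀ = v := by
    rw [← conjTranspose_eq_transpose_of_trivial]; exact hv.isHermitian
  have mm : ∀ p q : Matrix (Fin m) (Fin m) ℝ,
      (p * q).map ((↑) : ℝ → ℂ) = p.map ((↑) : ℝ → ℂ) * q.map ((↑) : ℝ → ℂ) := fun p q =>
    Matrix.map_mul (f := Complex.ofRealHom)
  have ms : ∀ p q : Matrix (Fin m) (Fin m) ℝ,
      (p - q).map ((↑) : ℝ → ℂ) = p.map ((↑) : ℝ → ℂ) - q.map ((↑) : ℝ → ℂ) := fun p q => by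
    ext i j; simp
  have m1 : (1 : Matrix (Fin m) (Fin m) ℝ).map ((↑) : ℝ → ℂ) = 1 := by
    simp
  have mh : ∀ p : Matrix (Fin m) (Fin m) ℝ,
      (p.map ((↑) : ℝ → ℂ))ᴴ = (p.map ((↑) : ℝ → ℂ))ᵀ := fun p => by
    ext i j; simp
  replace e1 := congrArg (fun p => p.map ((↑) : ℝ → ℂ)) e1
  replace e2 := congrArg (fun p => p.map ((↑) : ℝ → ℂ)) e2
  replace e3 := congrArg (fun p => p.map ((↑) : ℝ → ℂ)) e3
  replace e4 := congrArg (fun p => p.map ((↑) : ℝ → ℂ)) e4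
  simp only [mm, ms, m1, transpose_map] at e1 e2 e3 e4
  have hxt : xᵀ = x := by
    rw [hx, transpose_add, transpose_smul, ← transpose_map, ← transpose_map, hu, hvt]
  have hxx : x - xᴴ = (2 * Complex.I) • v.map ((↑) : ℝ → ℂ) := by
    rw [hx, conjTranspose_add, conjTranspose_smul, mh, mh, ← transpose_map, ← transpose_map,
      hu, hvt]
    ext i j; simp; ring
  have hT := aux_alg _ _ _ _ x x e1 e2 e3 e4
  have hH := aux_alg _ _ _ _ x xᴴ e1 e2 e3 e4
  rw [hxx] at hH
  rw [sub_self, sub_eq_zero] at hT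
  generalize hP : a.map ((↑) : ℝ → ℂ) * x + b.map ((↑) : ℝ → ℂ) = P at *
  generalize hQ : c.map ((↑) : ℝ → ℂ) * x + d.map ((↑) : ℝ → ℂ) = Q at *
  have hPt : x * (a.map ((↑) : ℝ → ℂ))ᵀ + (b.map ((↑) : ℝ → ℂ))ᵀ = Pᵀ := by
    rw [← hP, transpose_add, transpose_mul, hxt]
  have hQt : x * (c.map ((↑) : ℝ → ℂ))ᵀ + (d.map ((↑) : ℝ → ℂ))ᵀ = Qᵀ := by
    rw [← hQ, transpose_add, transpose_mul, hxt]
  have hPh : xᴴ * (a.map ((↑) : ℝ → ℂ))ᵀ + (b.map ((↑) : ℝ → ℂ))ᵀ = Pᴴ := by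
    rw [← hP, conjTranspose_add, conjTranspose_mul, mh, mh]
  have hQh : xᴴ * (c.map ((↑) : ℝ → ℂ))ᵀ + (d.map ((↑) : ℝ → ℂ))ᵀ = Qᴴ := by
    rw [← hQ, conjTranspose_add, conjTranspose_mul, mh, mh]
  rw [hPt, hQt] at hT
  rw [hPh, hQh] at hH
  have hU : IsUnit Q := by
    rw [← mulVec_injective_iff_isUnit, ← coe_mulVecLin, ← LinearMap.ker_eq_bot,
      LinearMap.ker_eq_bot']
    intro w hw
    rw [mulVecLin_apply] at hw
    by_contra hne
    have hpos := aux_posDef_pos v hv w hne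
    have h0 : star w ⬝ᵥ (((2 * Complex.I) • v.map ((↑) : ℝ → ℂ)) *ᵥ w) = 0 := by
      rw [← hH, sub_mulVec, ← mulVec_mulVec, ← mulVec_mulVec, hw, mulVec_zero, sub_zero,
        dotProduct_mulVec, ← star_mulVec, hw]
      simp
    rw [smul_mulVec, dotProduct_smul, smul_eq_mul] at h0
    have h00 := (mul_eq_zero.mp h0).resolve_left (by simp)
    rw [h00] at hpos
    simp at hpos
  refine ⟨hU, ?_⟩
  have hdet : IsUnit Q.det := (isUnit_iff_isUnit_det _).mp hU
  obtain ⟨Y, hY⟩ : ∃ Y, Y = P * Q⁻¹ := ⟨_, rfl⟩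
  rw [← hY]
  have hYQ : Y * Q = P := by rw [hY, nonsing_inv_mul_cancel_right _ _ hdet]
  rw [← hYQ] at hT hH
  have hYt : Yᵀ = Y := by
    rw [transpose_mul, ← mul_assoc] at hT
    have hT2 := hU.mul_right_cancel hT
    have hUt : IsUnit Qᵀ := (isUnit_transpose _).mpr hU
    rw [hUt.mul_right_inj] at hT2
    exact hT2.symm
  refine ⟨Y.map Complex.re, Y.map Complex.im, ?_, ?_, ?_⟩
  · rw [← transpose_map, hYt]
  · have hYY : Y - Yᴴ = (2 * Complex.I) • (Y.map Complex.im).map ((↑) : ℝ → ℂ) := by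
      ext i j
      have : Y j i = Y i j := congrFun (congrFun hYt i) j
      apply Complex.ext <;> simp [this]
      ring
    have hV : Qᴴ * ((Y.map Complex.im).map ((↑) : ℝ → ℂ)) * Q = v.map ((↑) : ℝ → ℂ) := by
      have : (2 * Complex.I) • (Qᴴ * ((Y.map Complex.im).map ((↑) : ℝ → ℂ)) * Q)
          = (2 * Complex.I) • v.map ((↑) : ℝ → ℂ) := by
        rw [← hH, ← smul_mul_assoc, ← mul_smul_comm, ← hYY, conjTranspose_mul]
        noncomm_ring
      exact smul_right_injective _ (by simp : (2 * Complex.I) ≠ 0) this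
    refine PosDef.of_dotProduct_mulVec_pos ?_ ?_
    · rw [IsHermitian, conjTranspose_eq_transpose_of_trivial, ← transpose_map, hYt]
    · intro p hp
      have hz : ∃ w, Q *ᵥ w = fun i => (p i : ℂ) := ⟨Q⁻¹ *ᵥ fun i => (p i : ℂ), by
        rw [mulVec_mulVec, mul_nonsing_inv _ hdet, one_mulVec]⟩
      obtain ⟨w, hw⟩ := hz
      have hwne : w ≠ 0 := by
        rintro rfl
        apply hp
        funext i
        have := congrFun hw i
        simpa using this.symm
      have hpos := aux_posDef_pos v hv w hwne
      rw [← hV, ← mulVec_mulVec, ← mulVec_mulVec, dotProduct_mulVec, ← star_mulVec, hw] at hpos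
      have hfin : star p ⬝ᵥ ((Y.map Complex.im) *ᵥ p) = ((star fun i => (p i : ℂ)) ⬝ᵥ
          (((Y.map Complex.im).map ((↑) : ℝ → ℂ)) *ᵥ fun i => (p i : ℂ))).re := by
        simp [dotProduct, mulVec]
      rw [hfin]
      exact hpos
  · ext i j
    apply Complex.ext <;> simp
end

section
/- Let m ≥ 1 and x = u + iv ∈ SH_m. Then φ(x)[iI_m] = x, i.e., the symplectic matrix φ(x) = [[v^{1/2}, u v^{-1/2}], [0, v^{-1/2}]] carries the base point iI_m to x under the Möbius action. Consequently, the action of Sp_{2m} on SH_m is transitive. -/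
open Matrix

/-- Membership in the Siegel upper half space. -/
def inSH {m : ℕ} (x : Matrix (Fin m) (Fin m) ℂ) : Prop :=
  ∃ u v : Matrix (Fin m) (Fin m) ℝ, uᵀ = u ∧ v.PosDef ∧
    x = u.map ((↑) : ℝ → ℂ) + Complex.I • v.map ((↑) : ℝ → ℂ)

/-- Membership in the real symplectic group Sp_{2m}, in block form. -/
def inSp {m : ℕ} (s : Matrix (Fin m ⊕ Fin m) (Fin m ⊕ Fin m) ℝ) : Prop :=
  s.toBlocks₁₁ * s.toBlocks₁₂ᵀ = s.toBlocks₁₂ * s.toBlocks₁₁ᵀ ∧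
  s.toBlocks₂₁ * s.toBlocks₂₂ᵀ = s.toBlocks₂₂ * s.toBlocks₂₁ᵀ ∧
  s.toBlocks₁₁ * s.toBlocks₂₂ᵀ - s.toBlocks₁₂ * s.toBlocks₂₁ᵀ = 1

/-- The symplectic Möbius action s[x] = (a x + b)(c x + d)⁻¹. -/
noncomputable def mobius {m : ℕ} (s : Matrix (Fin m ⊕ Fin m) (Fin m ⊕ Fin m) ℝ)
    (x : Matrix (Fin m) (Fin m) ℂ) : Matrix (Fin m) (Fin m) ℂ :=
  (s.toBlocks₁₁.map ((↑) : ℝ → ℂ) * x + s.toBlocks₁₂.map ((↑) : ℝ → ℂ)) *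
  (s.toBlocks₂₁.map ((↑) : ℝ → ℂ) * x + s.toBlocks₂₂.map ((↑) : ℝ → ℂ))⁻¹

theorem aux_mobius {m : ℕ} (a b d : Matrix (Fin m) (Fin m) ℝ) (h : a * dᵀ = 1)
    (x : Matrix (Fin m) (Fin m) ℂ) :
    mobius (Matrix.fromBlocks a b 0 d) x
      = (a.map ((↑) : ℝ → ℂ) * x + b.map ((↑) : ℝ → ℂ)) * aᵀ.map ((↑) : ℝ → ℂ) := by
  have h2 : d * aᵀ = 1 := by
    have := congrArg Matrix.transpose h
    simpa using this
  have h3 : d.map ((↑) : ℝ → ℂ) * aᵀ.map ((↑) : ℝ → ℂ) = 1 := by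
    have := congrArg (fun M : Matrix (Fin m) (Fin m) ℝ => M.map Complex.ofRealHom) h2
    simp only [Matrix.map_mul] at this
    rw [Matrix.map_one _ (map_zero _) (map_one _)] at this
    exact this
  have h4 : (0 : Matrix (Fin m) (Fin m) ℝ).map ((↑) : ℝ → ℂ) = 0 :=
    Matrix.map_zero _ Complex.ofReal_zero
  unfold mobius
  simp only [Matrix.toBlocks_fromBlocks₁₁, Matrix.toBlocks_fromBlocks₁₂,
    Matrix.toBlocks_fromBlocks₂₁, Matrix.toBlocks_fromBlocks₂₂, h4, zero_mul, zero_add]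
  rw [Matrix.inv_eq_right_inv h3]

theorem aux_map_mul {m : ℕ} (a b : Matrix (Fin m) (Fin m) ℝ) :
    (a * b).map ((↑) : ℝ → ℂ) = a.map ((↑) : ℝ → ℂ) * b.map ((↑) : ℝ → ℂ) :=
  Matrix.map_mul (f := Complex.ofRealHom)

theorem aux_map_sub {m : ℕ} (a b : Matrix (Fin m) (Fin m) ℝ) :
    (a - b).map ((↑) : ℝ → ℂ) = a.map ((↑) : ℝ → ℂ) - b.map ((↑) : ℝ → ℂ) := by
  ext i j; simp

open scoped MatrixOrder Matrix.Norms.L2Operator in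
theorem aux_fact {m : ℕ} (v : Matrix (Fin m) (Fin m) ℝ) (hv : v.PosDef) :
    ∃ B C : Matrix (Fin m) (Fin m) ℝ, v = B * Bᵀ ∧ B * C = 1 ∧ C * B = 1 := by
  obtain ⟨B, hB, h⟩ : ∃ B : Matrix (Fin m) (Fin m) ℝ, IsUnit B ∧ v = Bᴴ * B := by
    obtain ⟨y, hy, h⟩ := CStarAlgebra.isStrictlyPositive_iff_eq_star_mul_self.mp
      hv.isStrictlyPositive
    exact ⟨y, hy, h⟩
  have hd := (Matrix.isUnit_iff_isUnit_det _).1 hB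
  refine ⟨Bᵀ, B⁻¹ᵀ, ?_, ?_, ?_⟩
  · simpa [Matrix.conjTranspose_eq_transpose_of_trivial] using h
  · rw [← Matrix.transpose_mul, Matrix.nonsing_inv_mul _ hd, Matrix.transpose_one]
  · rw [← Matrix.transpose_mul, Matrix.mul_nonsing_inv _ hd, Matrix.transpose_one]

/-- φ(x) carries the base point iI_m to x = u + iv under the
Möbius action; consequently the action of Sp_{2m} on SH_m is transitive. -/
theorem phi_carries_basepoint_and_transitive (m : ℕ) (hm : 1 ≤ m)
    (u v : Matrix (Fin m) (Fin m) ℝ) (hu : uᵀ = u) (hv : v.PosDef)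
    (r : Matrix (Fin m) (Fin m) ℝ) (hr : r.PosDef ∧ r * r = v) :
    mobius (Matrix.fromBlocks r (u * r⁻¹) 0 r⁻¹)
        (Complex.I • (1 : Matrix (Fin m) (Fin m) ℂ))
      = u.map ((↑) : ℝ → ℂ) + Complex.I • v.map ((↑) : ℝ → ℂ) ∧
    (∀ x y : Matrix (Fin m) (Fin m) ℂ, inSH x → inSH y →
      ∃ s : Matrix (Fin m ⊕ Fin m) (Fin m ⊕ Fin m) ℝ, inSp s ∧ mobius s x = y) := by
  constructor
  · obtain ⟨hr, rfl⟩ := hr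
    have hrt : rᵀ = r := by
      simpa [Matrix.conjTranspose_eq_transpose_of_trivial] using hr.isHermitian.eq
    have hd : IsUnit r.det := (Matrix.isUnit_iff_isUnit_det _).1 hr.isUnit
    rw [aux_mobius _ _ _ (by rw [Matrix.transpose_nonsing_inv, hrt, Matrix.mul_nonsing_inv _ hd]),
      hrt, add_mul, ← aux_map_mul, mul_assoc u, Matrix.nonsing_inv_mul _ hd, mul_one, aux_map_mul]
    simp [add_comm]
  · rintro x y ⟨u, v, hu, hv, rfl⟩ ⟨u', v', hu', hv', rfl⟩
    obtain ⟨B, C, rfl, hBC, hCB⟩ := aux_fact v hv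
    obtain ⟨B', C', rfl, hBC', hCB'⟩ := aux_fact v' hv'
    have tBC : Cᵀ * Bᵀ = 1 := by rw [← Matrix.transpose_mul, hBC, Matrix.transpose_one]
    have tCB : Bᵀ * Cᵀ = 1 := by rw [← Matrix.transpose_mul, hCB, Matrix.transpose_one]
    have tCB' : B'ᵀ * C'ᵀ = 1 := by rw [← Matrix.transpose_mul, hCB', Matrix.transpose_one]
    have tBC' : C'ᵀ * B'ᵀ = 1 := by rw [← Matrix.transpose_mul, hBC', Matrix.transpose_one]
    obtain ⟨a, ha⟩ : ∃ a, a = B' * C := ⟨_, rfl⟩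
    obtain ⟨d, hd⟩ : ∃ d, d = C'ᵀ * Bᵀ := ⟨_, rfl⟩
    have had : a * dᵀ = 1 := by
      rw [ha, hd, Matrix.transpose_mul, Matrix.transpose_transpose, Matrix.transpose_transpose,
        mul_assoc, ← mul_assoc C, hCB, one_mul, hBC']
    have hda : d * aᵀ = 1 := by
      have := congrArg Matrix.transpose had
      simpa using this
    have hav : a * (B * Bᵀ) * aᵀ = B' * B'ᵀ := by
      have e : a * B = B' := by rw [ha, mul_assoc, hCB, mul_one]
      rw [← mul_assoc, e, mul_assoc, ← Matrix.transpose_mul, e]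
    have hs : (u' - a * u * aᵀ)ᵀ = u' - a * u * aᵀ := by
      simp [Matrix.transpose_mul, hu, hu', mul_assoc]
    have hb : (u' - a * u * aᵀ) * d * aᵀ = u' - a * u * aᵀ := by rw [mul_assoc, hda, mul_one]
    refine ⟨Matrix.fromBlocks a ((u' - a * u * aᵀ) * d) 0 d, ⟨?_, ?_, ?_⟩, ?_⟩
    · simp only [Matrix.toBlocks_fromBlocks₁₁, Matrix.toBlocks_fromBlocks₁₂]
      rw [hb, Matrix.transpose_mul, hs, ← mul_assoc, had, one_mul]
    · simp
    · simp [had]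
    · rw [aux_mobius _ _ _ had, add_mul, ← aux_map_mul, hb, ← hav, aux_map_sub]
      simp only [aux_map_mul, mul_add, add_mul, Matrix.mul_smul, Matrix.smul_mul]
      abel
end

section
/- Let m ≥ 1 and s ∈ Sp_{2m}. Then s[iI_m] = iI_m under the symplectic Möbius action if and only if s is an orthogonal matrix (sᵀ s = I_{2m}); i.e., the stabilizer of the base point iI_m in Sp_{2m} is exactly Sp_{2m} ∩ O_{2m}. -/
open Matrix

theorem sp_aux {m : ℕ} (s : Matrix (Fin m ⊕ Fin m) (Fin m ⊕ Fin m) ℝ) (hs : inSp s) :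
    sᵀ * s = 1 ↔ s.toBlocks₁₁ = s.toBlocks₂₂ ∧ s.toBlocks₁₂ = - s.toBlocks₂₁ := by
  obtain ⟨h1, h2, h3⟩ := hs
  have hsb := (fromBlocks_toBlocks s).symm
  generalize s.toBlocks₁₁ = a at *
  generalize s.toBlocks₁₂ = b at *
  generalize s.toBlocks₂₁ = c at *
  generalize s.toBlocks₂₂ = d at *
  have h4 : d * aᵀ - c * bᵀ = 1 := by
    have := congrArg transpose h3
    simpa using this
  have ht : s * fromBlocks dᵀ (-bᵀ) (-cᵀ) aᵀ = 1 := by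
    rw [hsb, fromBlocks_multiply, ← fromBlocks_one]
    congr 1
    · simpa [sub_eq_add_neg] using h3
    · simp [h1]
    · simp [h2]
    · rw [← h4]; simp [sub_eq_add_neg, add_comm]
  have hst : sᵀ = fromBlocks aᵀ cᵀ bᵀ dᵀ := by rw [hsb, fromBlocks_transpose]
  constructor
  · intro h
    have e : sᵀ = fromBlocks dᵀ (-bᵀ) (-cᵀ) aᵀ := left_inv_eq_right_inv h ht
    rw [hst, fromBlocks_inj] at e
    obtain ⟨e1, e2, e3, e4⟩ := e
    refine ⟨transpose_injective e1, transpose_injective ?_⟩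
    rw [e3, transpose_neg]
  · rintro ⟨rfl, rfl⟩
    rw [mul_eq_one_comm, hst]
    simpa using ht

/-- for s ∈ Sp_{2m}, s fixes the base point iI_m under the Möbius
action iff s is orthogonal; i.e. the stabilizer of iI_m is Sp_{2m} ∩ O_{2m}. -/
theorem stabilizer_of_basepoint (m : ℕ) (hm : 1 ≤ m)
    (s : Matrix (Fin m ⊕ Fin m) (Fin m ⊕ Fin m) ℝ) (hs : inSp s) :
    mobius s (Complex.I • (1 : Matrix (Fin m) (Fin m) ℂ))
        = Complex.I • (1 : Matrix (Fin m) (Fin m) ℂ) ↔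
      sᵀ * s = 1 := by
  rw [sp_aux s hs]
  obtain ⟨h1, h2, h3⟩ := hs
  unfold mobius
  generalize s.toBlocks₁₁ = a at *
  generalize s.toBlocks₁₂ = b at *
  generalize s.toBlocks₂₁ = c at *
  generalize s.toBlocks₂₂ = d at *
  simp only [mul_smul_comm, mul_one]
  constructor
  · intro h
    have hu : IsUnit (Complex.I • c.map ((↑) : ℝ → ℂ) + d.map ((↑) : ℝ → ℂ)).det := by
      rw [← isUnit_nonsing_inv_det_iff]
      have := congrArg det h
      rw [det_mul, det_smul, det_one, mul_one] at this
      rw [isUnit_iff_ne_zero]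
      intro h0
      rw [h0, mul_zero] at this
      exact pow_ne_zero _ Complex.I_ne_zero this.symm
    have h' := congrArg (· * (Complex.I • c.map ((↑) : ℝ → ℂ) + d.map ((↑) : ℝ → ℂ))) h
    simp only [nonsing_inv_mul_cancel_right _ _ hu, smul_mul_assoc, one_mul] at h'
    constructor
    · ext i j
      have := congrArg Complex.im (congrFun (congrFun h' i) j)
      simpa using this
    · ext i j
      have := congrArg Complex.re (congrFun (congrFun h' i) j)
      simpa using this
  · rintro ⟨rfl, rfl⟩
    have e : Complex.I • a.map ((↑) : ℝ → ℂ) + (-c).map ((↑) : ℝ → ℂ)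
        = Complex.I • (Complex.I • c.map ((↑) : ℝ → ℂ) + a.map ((↑) : ℝ → ℂ)) := by
      ext i j
      apply Complex.ext <;> simp
    have hq : (Complex.I • c.map ((↑) : ℝ → ℂ) + a.map ((↑) : ℝ → ℂ)) *
        (-Complex.I • cᵀ.map ((↑) : ℝ → ℂ) + aᵀ.map ((↑) : ℝ → ℂ)) = 1 := by
      have k2 := congrArg (fun M => M.map Complex.ofRealHom) h2
      have k3 := congrArg (fun M => M.map Complex.ofRealHom) h3
      simp only [neg_mul, sub_neg_eq_add] at k3
      rw [Matrix.map_add _ (map_add _), Matrix.map_mul, Matrix.map_mul,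
        Matrix.map_one _ (map_zero _) (map_one _)] at k3
      rw [Matrix.map_mul, Matrix.map_mul] at k2
      change c.map ((↑) : ℝ → ℂ) * aᵀ.map ((↑) : ℝ → ℂ) =
        a.map ((↑) : ℝ → ℂ) * cᵀ.map ((↑) : ℝ → ℂ) at k2
      change a.map ((↑) : ℝ → ℂ) * aᵀ.map ((↑) : ℝ → ℂ) +
        c.map ((↑) : ℝ → ℂ) * cᵀ.map ((↑) : ℝ → ℂ) = 1 at k3
      rw [add_mul, mul_add, mul_add]
      simp only [smul_mul_assoc, mul_smul_comm, smul_smul, k2]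
      rw [← k3]
      simp
      abel
    have hu := isUnit_det_of_right_inverse hq
    rw [e, smul_mul_assoc, mul_nonsing_inv _ hu]
end

section
/- Let m ≥ 1, s ∈ Sp_{2m} and x ∈ SH_m. Then φ(s[x]) φ(s[x])ᵀ = s φ(x) φ(x)ᵀ sᵀ, where s[x] is the symplectic Möbius action of s on x. -/
open Matrix

theorem aux_P {m : ℕ} (u v r : Matrix (Fin m) (Fin m) ℝ) (hu : uᵀ = u)
    (hr : r.PosDef ∧ r * r = v) :
    ((Matrix.fromBlocks r (u * r⁻¹) 0 r⁻¹) * (Matrix.fromBlocks r (u * r⁻¹) 0 r⁻¹)ᵀ) *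
      Matrix.fromBlocks 0 (-1) 1 0 * Matrix.fromBlocks v u 0 1 =
      Matrix.fromBlocks v u 0 1 * Matrix.fromBlocks 0 (-1) 1 0 := by
  obtain ⟨hp, rfl⟩ := hr
  have hrt : rᵀ = r := by
    rw [← conjTranspose_eq_transpose_of_trivial]; exact hp.1
  have hdet : IsUnit r.det := (Matrix.isUnit_iff_isUnit_det r).1 hp.isUnit
  have h1 : r⁻¹ * r = 1 := Matrix.nonsing_inv_mul r hdet
  have h2 : r⁻¹ * (r * r) = r := by rw [← mul_assoc, h1, one_mul]
  simp only [fromBlocks_transpose, fromBlocks_multiply, transpose_mul, transpose_nonsing_inv,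
    hu, hrt, transpose_zero]
  simp [mul_assoc, h1, h2]

theorem aux_Zdet {m : ℕ} (u v : Matrix (Fin m) (Fin m) ℝ) (hv : v.PosDef) :
    IsUnit (Matrix.fromBlocks v u 0 1 : Matrix (Fin m ⊕ Fin m) (Fin m ⊕ Fin m) ℝ) := by
  rw [Matrix.isUnit_iff_isUnit_det, det_fromBlocks_zero₂₁]
  simpa using hv.det_pos.ne'

theorem aux_symp {n : Type*} [Fintype n] [DecidableEq n] (s w : Matrix n n ℝ)
    (hw : w * w = -1) (h : s * w * sᵀ = w) : IsUnit s ∧ sᵀ * w * s = w := by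
  have h1 : s * (-(w * sᵀ * w)) = 1 := by
    rw [mul_neg, ← mul_assoc, ← mul_assoc, h, hw, neg_neg]
  have h2 := mul_eq_one_comm.1 h1
  refine ⟨IsUnit.of_mul_eq_one _ h1, ?_⟩
  have h3 : w * (-(w * sᵀ * w) * s) = w := by rw [h2, mul_one]
  have h4 : w * (-(w * sᵀ * w) * s) = -((w * w) * sᵀ * w * s) := by
    simp only [mul_assoc, neg_mul, mul_neg]
  rw [h4, hw] at h3
  simpa using h3

theorem aux_main {n : Type*} [Fintype n] [DecidableEq n] (s w P P' Z Z' K : Matrix n n ℝ)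
    (hw : w * w = -1) (h : s * w * sᵀ = w) (hZ : IsUnit Z)
    (hK : s * Z = Z' * K) (hKw : K * w = w * K)
    (hP : P * w * Z = Z * w) (hP' : P' * w * Z' = Z' * w) : P' = s * P * sᵀ := by
  obtain ⟨hs, h'⟩ := aux_symp s w hw h
  have hwu : IsUnit w := IsUnit.of_mul_eq_one (-w) (by rw [mul_neg, hw, neg_neg])
  have hu : IsUnit (w * (s * Z)) := hwu.mul (hs.mul hZ)
  apply hu.mul_right_cancel
  calc P' * (w * (s * Z)) = (P' * w * Z') * K := by rw [hK]; simp only [mul_assoc]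
    _ = Z' * (w * K) := by rw [hP', mul_assoc]
    _ = s * (Z * w) := by rw [← hKw, ← mul_assoc, ← hK, mul_assoc]
    _ = s * (P * (sᵀ * w * s) * Z) := by rw [h', hP]
    _ = _ := by simp only [mul_assoc]

theorem aux_re_im {m : ℕ} (A B C D : Matrix (Fin m) (Fin m) ℝ)
    (h : A.map ((↑) : ℝ → ℂ) + Complex.I • B.map ((↑) : ℝ → ℂ) =
      C.map ((↑) : ℝ → ℂ) + Complex.I • D.map ((↑) : ℝ → ℂ)) : A = C ∧ B = D := by
  constructor
  · ext i j
    simpa using congrArg Complex.re (congrFun (congrFun h i) j)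
  · ext i j
    simpa using congrArg Complex.im (congrFun (congrFun h i) j)

theorem aux_mob {m : ℕ} (hm : 1 ≤ m) (a b c d u v u' v' : Matrix (Fin m) (Fin m) ℝ)
    (hv' : v'.PosDef)
    (h : (a.map ((↑) : ℝ → ℂ) * (u.map ((↑) : ℝ → ℂ) + Complex.I • v.map ((↑) : ℝ → ℂ)) +
        b.map ((↑) : ℝ → ℂ)) *
      (c.map ((↑) : ℝ → ℂ) * (u.map ((↑) : ℝ → ℂ) + Complex.I • v.map ((↑) : ℝ → ℂ)) +
        d.map ((↑) : ℝ → ℂ))⁻¹ = u'.map ((↑) : ℝ → ℂ) + Complex.I • v'.map ((↑) : ℝ → ℂ)) :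
    a * u + b = u' * (c * u + d) - v' * (c * v) ∧
    a * v = u' * (c * v) + v' * (c * u + d) := by
  have M : ∀ A B : Matrix (Fin m) (Fin m) ℝ, (A * B).map ((↑) : ℝ → ℂ) =
      A.map ((↑) : ℝ → ℂ) * B.map ((↑) : ℝ → ℂ) := fun A B =>
    Matrix.map_mul (f := Complex.ofRealHom)
  have Ad : ∀ A B : Matrix (Fin m) (Fin m) ℝ, (A + B).map ((↑) : ℝ → ℂ) =
      A.map ((↑) : ℝ → ℂ) + B.map ((↑) : ℝ → ℂ) := fun A B => by ext; simp
  have Sb : ∀ A B : Matrix (Fin m) (Fin m) ℝ, (A - B).map ((↑) : ℝ → ℂ) =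
      A.map ((↑) : ℝ → ℂ) - B.map ((↑) : ℝ → ℂ) := fun A B => by ext; simp
  set j := c.map ((↑) : ℝ → ℂ) * (u.map ((↑) : ℝ → ℂ) + Complex.I • v.map ((↑) : ℝ → ℂ)) +
        d.map ((↑) : ℝ → ℂ) with hj
  have hdet : IsUnit j.det := by
    by_contra hn
    rw [Matrix.nonsing_inv_apply_not_isUnit _ hn, mul_zero] at h
    have := (aux_re_im 0 0 u' v' (by rw [← h]; ext; simp)).2
    have h0 := hv'.diag_pos (i := (⟨0, hm⟩ : Fin m))
    rw [← this] at h0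
    simp at h0
  have h1 := congrArg (· * j) h
  simp only [mul_assoc, Matrix.nonsing_inv_mul j hdet, mul_one] at h1
  apply aux_re_im
  simp only [M, Ad, Sb]
  have e : ∀ p q : Matrix (Fin m) (Fin m) ℂ, Complex.I • Complex.I • (p * q) = - (p * q) := by
    intro p q
    rw [smul_smul, Complex.I_mul_I, neg_one_smul]
  rw [hj] at h1
  simp only [mul_add, add_mul, smul_mul_assoc, mul_smul_comm, smul_add, e] at h1 ⊢
  rw [add_right_comm, h1]
  abel

/-- φ(s[x]) φ(s[x])ᵀ = s φ(x) φ(x)ᵀ sᵀ for s ∈ Sp_{2m} and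
x ∈ SH_m.  Here x = u + iv with v^{1/2} = r, and s[x] = u' + iv' with
v'^{1/2} = r'. -/
theorem phi_equivariance (m : ℕ) (hm : 1 ≤ m)
    (s : Matrix (Fin m ⊕ Fin m) (Fin m ⊕ Fin m) ℝ) (hs : inSp s)
    (u v : Matrix (Fin m) (Fin m) ℝ) (hu : uᵀ = u) (hv : v.PosDef)
    (x : Matrix (Fin m) (Fin m) ℂ)
    (hx : x = u.map ((↑) : ℝ → ℂ) + Complex.I • v.map ((↑) : ℝ → ℂ))
    (r : Matrix (Fin m) (Fin m) ℝ) (hr : r.PosDef ∧ r * r = v)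
    (u' v' : Matrix (Fin m) (Fin m) ℝ) (hu' : u'ᵀ = u') (hv' : v'.PosDef)
    (hx' : mobius s x = u'.map ((↑) : ℝ → ℂ) + Complex.I • v'.map ((↑) : ℝ → ℂ))
    (r' : Matrix (Fin m) (Fin m) ℝ) (hr' : r'.PosDef ∧ r' * r' = v') :
    (Matrix.fromBlocks r' (u' * r'⁻¹) 0 r'⁻¹) *
        (Matrix.fromBlocks r' (u' * r'⁻¹) 0 r'⁻¹)ᵀ
      = s * ((Matrix.fromBlocks r (u * r⁻¹) 0 r⁻¹) *
          (Matrix.fromBlocks r (u * r⁻¹) 0 r⁻¹)ᵀ) * sᵀ := by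
  subst hx
  have hmob := aux_mob hm _ _ _ _ u v u' v' hv' hx'
  obtain ⟨h1, h2, h3⟩ := hs
  have h3' : s.toBlocks₂₂ * s.toBlocks₁₁ᵀ - s.toBlocks₂₁ * s.toBlocks₁₂ᵀ = 1 := by
    simpa using congrArg transpose h3
  have hsb := (fromBlocks_toBlocks s).symm
  generalize s.toBlocks₁₁ = a at *
  generalize s.toBlocks₁₂ = b at *
  generalize s.toBlocks₂₁ = c at *
  generalize s.toBlocks₂₂ = d at *
  obtain ⟨e1, e2⟩ := hmob
  refine aux_main s (fromBlocks 0 (-1) 1 0) _ _ (fromBlocks v u 0 1) (fromBlocks v' u' 0 1)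
    (fromBlocks (c * u + d) (-(c * v)) (c * v) (c * u + d)) ?_ ?_ (aux_Zdet u v hv) ?_ ?_
    (aux_P u v r hu hr) (aux_P u' v' r' hu' hr')
  · rw [fromBlocks_multiply, ← fromBlocks_one, fromBlocks_neg]
    simp
  · rw [hsb, fromBlocks_transpose, fromBlocks_multiply, fromBlocks_multiply]
    have h4 : c * bᵀ = d * aᵀ - 1 := by rw [← h3']; abel
    have h5 : b * cᵀ = a * dᵀ - 1 := by rw [← h3]; abel
    congr 1 <;> simp [h1, h2, h4, h5]
    abel
  · rw [hsb, fromBlocks_multiply, fromBlocks_multiply]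
    congr 1
    · simp [e2]; abel
    · simp [e1]; abel
    · simp
    · simp
  · simp [fromBlocks_multiply]
end

section
/- Let m ≥ 1 and let x, y ∈ SH_m. Then the complex matrices x − ȳ and x̄ − y are invertible, and every eigenvalue (root of the characteristic polynomial over ℂ, with multiplicity) of the cross-ratio matrix R(x,y) = (x−y)(x−ȳ)^{-1}(x̄−ȳ)(x̄−y)^{-1} is a real number r with 0 ≤ r < 1. -/
open Matrix

/-- Entrywise complex conjugate of a complex matrix. -/
def conjM {m : ℕ} (x : Matrix (Fin m) (Fin m) ℂ) : Matrix (Fin m) (Fin m) ℂ :=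
  x.map (starRingEnd ℂ)

/-- The cross-ratio R(x,y) = (x−y)(x−ȳ)⁻¹(x̄−ȳ)(x̄−y)⁻¹. -/
noncomputable def crossRatio {m : ℕ} (x y : Matrix (Fin m) (Fin m) ℂ) :
    Matrix (Fin m) (Fin m) ℂ :=
  (x - y) * (x - conjM y)⁻¹ * (conjM x - conjM y) * (conjM x - y)⁻¹

section Aux

open scoped ComplexOrder MatrixOrder Matrix.Norms.L2Operator

lemma posDef_map_ofReal {m : ℕ} {v : Matrix (Fin m) (Fin m) ℝ} (hv : v.PosDef) :
    (v.map ((↑) : ℝ → ℂ)).PosDef := by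
  have hmap : ∀ a : Matrix (Fin m) (Fin m) ℝ,
      a.map ((↑) : ℝ → ℂ) = Complex.ofRealHom.mapMatrix a := fun a => rfl
  have hU : IsUnit (v.map ((↑) : ℝ → ℂ)) := by
    rw [hmap]; exact hv.isUnit.map _
  obtain ⟨B, hB⟩ := CStarAlgebra.nonneg_iff_eq_star_mul_self.mp hv.posSemidef.nonneg
  rw [Matrix.star_eq_conjTranspose] at hB
  have hS : (v.map ((↑) : ℝ → ℂ)).PosSemidef := by
    have : v.map ((↑) : ℝ → ℂ) = (B.map ((↑) : ℝ → ℂ))ᴴ * (B.map ((↑) : ℝ → ℂ)) := by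
      have h2 : (B.map ((↑) : ℝ → ℂ))ᴴ = (Bᴴ).map ((↑) : ℝ → ℂ) := by
        ext i j; simp
      rw [h2, hB, hmap, hmap, hmap, map_mul]
    rw [this]; exact Matrix.posSemidef_conjTranspose_mul_self _
  exact hS.posDef_iff_isUnit.mpr hU

lemma isUnit_of_skew {m : ℕ} {A S : Matrix (Fin m) (Fin m) ℂ} (hS : S.PosDef)
    (h : A = Aᴴ + (2 * Complex.I) • S) : IsUnit A := by
  rw [Matrix.isUnit_iff_isUnit_det, isUnit_iff_ne_zero]
  intro hd
  obtain ⟨w, hw, hAw⟩ := Matrix.exists_mulVec_eq_zero_iff.mpr hd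
  have hp := hS.dotProduct_mulVec_pos hw
  have h1 : star w ⬝ᵥ (Aᴴ *ᵥ w) = 0 := by
    rw [Matrix.dotProduct_mulVec, ← Matrix.star_mulVec, hAw]; simp
  have h2 : star w ⬝ᵥ (A *ᵥ w) = 0 := by rw [hAw]; simp
  rw [h, Matrix.add_mulVec, dotProduct_add, h1, Matrix.smul_mulVec, dotProduct_smul] at h2
  simp at h2
  exact hp.ne' h2

lemma core {m : ℕ} {A P Q : Matrix (Fin m) (Fin m) ℂ} (hP : P.PosDef) (hQ : Q.PosDef)
    (hA : IsUnit A) (h : A = Aᴴ + (2 * Complex.I) • (P + Q)) (w : Fin m → ℂ) (hw : w ≠ 0) (z : ℂ)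
    (hz : ((A - (2 * Complex.I) • Q) * A⁻¹ * (A - (2 * Complex.I) • P) * (Aᴴ)⁻¹) *ᵥ w = z • w) :
    0 ≤ z ∧ z < 1 := by
  set c : ℂ := 2 * Complex.I with hc
  have hcc : c * c = -4 := by
    rw [hc]; linear_combination 4 * Complex.I_mul_I
  have hsc : star c = -c := by simp [hc]
  have hAd : IsUnit A.det := (Matrix.isUnit_iff_isUnit_det A).mp hA
  have hQd : IsUnit Q.det := (Matrix.isUnit_iff_isUnit_det Q).mp hQ.isUnit
  have hHd : IsUnit (Aᴴ).det := by
    rw [Matrix.det_conjTranspose]; exact hAd.star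
  have a1 : A * A⁻¹ = 1 := Matrix.mul_nonsing_inv _ hAd
  have a2 : A⁻¹ * A = 1 := Matrix.nonsing_inv_mul _ hAd
  have q1 : Q * Q⁻¹ = 1 := Matrix.mul_nonsing_inv _ hQd
  have q2 : Q⁻¹ * Q = 1 := Matrix.nonsing_inv_mul _ hQd
  have b1 : Aᴴ * (Aᴴ)⁻¹ = 1 := Matrix.mul_nonsing_inv _ hHd
  have hiH : (A⁻¹)ᴴ = (Aᴴ)⁻¹ := Matrix.conjTranspose_nonsing_inv A
  have hBH : (A - c • Q)ᴴ = A - c • P := by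
    rw [Matrix.conjTranspose_sub, Matrix.conjTranspose_smul, hQ.isHermitian.eq, hsc]
    conv_rhs => rw [h]
    rw [smul_add, neg_smul]; abel
  set R := (A - c • Q) * A⁻¹ * (A - c • P) * (Aᴴ)⁻¹ with hR
  have e1 : Q⁻¹ * R = (A⁻¹ * (A - c • Q)) * Q⁻¹ * (A⁻¹ * (A - c • Q))ᴴ := by
    rw [Matrix.conjTranspose_mul, hBH, hiH, hR]
    have : Q⁻¹ * ((A - c • Q) * A⁻¹) = A⁻¹ * (A - c • Q) * Q⁻¹ := by
      simp only [sub_mul, mul_sub, smul_mul_assoc, mul_smul_comm, a1, a2, mul_one, one_mul]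
      rw [← mul_assoc, q2, mul_assoc, q1, mul_one, one_mul]
    simp only [← mul_assoc] at this ⊢
    rw [this]
  have e2 : R = 1 - (4 : ℂ) • (Q * (A⁻¹ * P * (A⁻¹)ᴴ)) := by
    have : (A - c • Q) * A⁻¹ * (A - c • P) = Aᴴ - (4 : ℂ) • (Q * (A⁻¹ * P)) := by
      have h3 : (A - c • Q) * A⁻¹ * (A - c • P)
          = A - c • (P + Q) + (c * c) • (Q * (A⁻¹ * P)) := by
        rw [sub_mul, a1, smul_mul_assoc, sub_mul, one_mul, smul_mul_assoc, mul_assoc, mul_sub, a2,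
          mul_smul_comm, mul_sub, mul_one, mul_smul_comm, smul_sub, smul_smul, smul_add]
        abel
      rw [h3, hcc]
      nth_rewrite 1 [h]
      rw [neg_smul]; abel
    rw [hR, this, sub_mul, b1, hiH, smul_mul_assoc]
    simp only [mul_assoc]
  have hN := hQ.inv
  have hNw := hN.dotProduct_mulVec_pos hw
  have k1 : 0 ≤ z * (star w ⬝ᵥ (Q⁻¹ *ᵥ w)) := by
    have := (hN.posSemidef.mul_mul_conjTranspose_same (A⁻¹ * (A - c • Q))).dotProduct_mulVec_nonneg w
    rwa [← e1, ← Matrix.mulVec_mulVec, hz, Matrix.mulVec_smul, dotProduct_smul, smul_eq_mul] at this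
  have hAi : IsUnit (A⁻¹) := by
    rw [Matrix.isUnit_nonsing_inv_iff]; exact hA
  have hM : (A⁻¹ * P * (A⁻¹)ᴴ).PosDef :=
    (Matrix.IsUnit.posDef_star_right_conjugate_iff hAi).mpr hP
  have k2 : 0 < (1 - z) * (star w ⬝ᵥ (Q⁻¹ *ᵥ w)) := by
    have h5 := hM.dotProduct_mulVec_pos hw
    have h6 : Q⁻¹ * (1 - R) = (4 : ℂ) • (A⁻¹ * P * (A⁻¹)ᴴ) := by
      rw [e2, sub_sub_cancel, mul_smul_comm, ← mul_assoc, q2, one_mul]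
    have h7 : (1 - z) * (star w ⬝ᵥ (Q⁻¹ *ᵥ w)) = 4 * (star w ⬝ᵥ ((A⁻¹ * P * (A⁻¹)ᴴ) *ᵥ w)) := by
      rw [← smul_eq_mul (4 : ℂ), ← dotProduct_smul, ← Matrix.smul_mulVec, ← h6,
        ← Matrix.mulVec_mulVec, Matrix.sub_mulVec, hz, Matrix.one_mulVec, Matrix.mulVec_sub,
        Matrix.mulVec_smul, dotProduct_sub, dotProduct_smul, smul_eq_mul]
      ring
    rw [h7]
    exact mul_pos (by norm_num) h5
  generalize star w ⬝ᵥ (Q⁻¹ *ᵥ w) = t at *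
  rw [Complex.lt_def] at hNw k2 ⊢
  rw [Complex.le_def] at k1 ⊢
  obtain ⟨t1, t2⟩ := hNw
  simp at t1 t2 k1 k2 ⊢
  simp [← t2] at k1 k2
  have h8 : z.im = 0 := by
    rcases k1.2 with h | h
    · exact h
    · exact absurd h t1.ne'
  refine ⟨⟨?_, h8.symm⟩, ?_, h8⟩
  · exact nonneg_of_mul_nonneg_left k1.1 t1
  · have := pos_of_mul_pos_left k2.1 t1.le
    linarith

end Aux

/-- for x, y in the Siegel upper half space, x − ȳ and x̄ − y are
invertible, and every eigenvalue of the cross-ratio R(x,y) is a real number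
in [0,1). -/
theorem crossRatio_eigenvalues_in_unit_interval (m : ℕ) (hm : 1 ≤ m)
    (u v u' v' : Matrix (Fin m) (Fin m) ℝ)
    (hu : uᵀ = u) (hv : v.PosDef) (hu' : u'ᵀ = u') (hv' : v'.PosDef)
    (x y : Matrix (Fin m) (Fin m) ℂ)
    (hx : x = u.map ((↑) : ℝ → ℂ) + Complex.I • v.map ((↑) : ℝ → ℂ))
    (hy : y = u'.map ((↑) : ℝ → ℂ) + Complex.I • v'.map ((↑) : ℝ → ℂ)) :
    IsUnit (x - conjM y) ∧ IsUnit (conjM x - y) ∧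
    ∀ z ∈ (crossRatio x y).charpoly.roots,
      ∃ r : ℝ, z = (r : ℂ) ∧ 0 ≤ r ∧ r < 1 := by
  have hP := posDef_map_ofReal hv
  have hQ := posDef_map_ofReal hv'
  have hvt : vᵀ = v := by simpa using hv.isHermitian.eq
  have hvt' : v'ᵀ = v' := by simpa using hv'.isHermitian.eq
  have hxc : conjM x = x - (2 * Complex.I) • v.map ((↑) : ℝ → ℂ) := by
    ext i j; simp [conjM, hx]; ring
  have hyc : conjM y = y - (2 * Complex.I) • v'.map ((↑) : ℝ → ℂ) := by
    ext i j; simp [conjM, hy]; ring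
  have hH : (x - conjM y)ᴴ = conjM x - y := by
    ext i j
    have a := congrFun (congrFun hu i) j
    have b := congrFun (congrFun hu' i) j
    have c := congrFun (congrFun hvt i) j
    have d := congrFun (congrFun hvt' i) j
    simp only [Matrix.transpose_apply] at a b c d
    simp [conjM, hx, hy, a, b, c, d]
  have hA : x - conjM y = (x - conjM y)ᴴ +
      (2 * Complex.I) • (v.map ((↑) : ℝ → ℂ) + v'.map ((↑) : ℝ → ℂ)) := by
    rw [hH, hxc, hyc, smul_add]; abel
  open scoped ComplexOrder in
  have hU := isUnit_of_skew (hP.add hQ) hA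
  refine ⟨hU, ?_, ?_⟩
  · rw [← hH]; exact hU.star
  intro z hz
  have hz' := (Polynomial.mem_roots'.mp hz).2
  rw [Polynomial.IsRoot, Matrix.eval_charpoly] at hz'
  obtain ⟨w, hw, hw0⟩ := Matrix.exists_mulVec_eq_zero_iff.mpr hz'
  have hev : crossRatio x y *ᵥ w = z • w := by
    rw [Matrix.sub_mulVec, sub_eq_zero] at hw0
    rw [← hw0]; simp [Matrix.scalar_apply, ← Matrix.smul_one_eq_diagonal, Matrix.smul_mulVec]
  have hc : crossRatio x y = ((x - conjM y) - (2 * Complex.I) • v'.map ((↑) : ℝ → ℂ)) *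
      (x - conjM y)⁻¹ * ((x - conjM y) - (2 * Complex.I) • v.map ((↑) : ℝ → ℂ)) *
      ((x - conjM y)ᴴ)⁻¹ := by
    have e1 : x - y = (x - conjM y) - (2 * Complex.I) • v'.map ((↑) : ℝ → ℂ) := by
      rw [hyc]; abel
    have e2 : conjM x - conjM y = (x - conjM y) - (2 * Complex.I) • v.map ((↑) : ℝ → ℂ) := by
      rw [hxc]; abel
    rw [hH, ← e1, ← e2]; rfl
  rw [hc] at hev
  obtain ⟨h0, h1⟩ := core hP hQ hU hA w hw z hev
  rw [Complex.le_def] at h0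
  rw [Complex.lt_def] at h1
  exact ⟨z.re, Complex.ext rfl (by simpa using h0.2.symm), by simpa using h0.1, by simpa using h1.1⟩
end

section
/- Let m ≥ 1, s ∈ Sp_{2m} and x, y ∈ SH_m. Then the characteristic polynomials of the cross-ratio matrices R(s[x], s[y]) and R(x, y) coincide; consequently the Siegel distance is invariant under the symplectic Möbius action: d_SH(s[x], s[y]) = d_SH(x, y). -/
open Matrix

/-- The Siegel distance, computed from the (real) eigenvalues of the
cross-ratio. -/
noncomputable def dSH {m : ℕ} (x y : Matrix (Fin m) (Fin m) ℂ) : ℝ :=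
  Real.sqrt ((((crossRatio x y).charpoly.roots).map (fun z =>
    (Real.log ((1 + Real.sqrt z.re) / (1 - Real.sqrt z.re))) ^ 2)).sum)

namespace SiegelAux

variable {m : ℕ}

abbrev M (m : ℕ) := Matrix (Fin m) (Fin m) ℂ

abbrev cx (a : Matrix (Fin m) (Fin m) ℝ) : M m := a.map ((↑) : ℝ → ℂ)

lemma cx_mul (a b : Matrix (Fin m) (Fin m) ℝ) : cx (a * b) = cx a * cx b :=
  Matrix.map_mul (f := Complex.ofRealHom)

lemma cx_sub (a b : Matrix (Fin m) (Fin m) ℝ) : cx (a - b) = cx a - cx b := by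
  ext i j; simp

lemma cx_one : cx (1 : Matrix (Fin m) (Fin m) ℝ) = 1 := by
  ext i j; by_cases h : i = j <;> simp [Matrix.one_apply, h]

lemma cx_tr (a : Matrix (Fin m) (Fin m) ℝ) : cx aᵀ = (cx a)ᵀ := rfl

lemma conjM_eq (x : M m) : conjM x = (xᴴ)ᵀ := by
  ext i j; simp [conjM]

lemma conjM_cx (a : Matrix (Fin m) (Fin m) ℝ) : conjM (cx a) = cx a := by
  ext i j; simp [conjM]

lemma conjM_mul (x y : M m) : conjM (x * y) = conjM x * conjM y :=
  Matrix.map_mul (f := starRingEnd ℂ)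

lemma conjM_add (x y : M m) : conjM (x + y) = conjM x + conjM y := by
  ext i j; simp [conjM]

lemma conjM_inv (x : M m) : conjM (x⁻¹) = (conjM x)⁻¹ := by
  rw [conjM_eq, conjM_eq, conjTranspose_nonsing_inv, transpose_nonsing_inv]

lemma conjM_mobius (s : Matrix (Fin m ⊕ Fin m) (Fin m ⊕ Fin m) ℝ) (x : M m) :
    conjM (mobius s x) = mobius s (conjM x) := by
  unfold mobius
  rw [conjM_mul, conjM_inv, conjM_add, conjM_add, conjM_mul, conjM_mul]
  simp only [conjM_cx]

lemma rel {a b c d : M m} (h1 : a * bᵀ = b * aᵀ) (h2 : c * dᵀ = d * cᵀ)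
    (h3 : a * dᵀ - b * cᵀ = 1) :
    aᵀ * c = cᵀ * a ∧ bᵀ * d = dᵀ * b ∧ dᵀ * a - bᵀ * c = 1 := by
  have h4 : d * aᵀ - c * bᵀ = 1 := by
    have := congrArg transpose h3
    simpa using this
  have key : fromBlocks a b c d * fromBlocks dᵀ (-bᵀ) (-cᵀ) aᵀ = 1 := by
    rw [fromBlocks_multiply, ← fromBlocks_one]
    congr 1
    · rw [← h3]; simp [sub_eq_add_neg]
    · simp [h1]
    · simp [h2]
    · rw [← h4]; simp [sub_eq_add_neg, add_comm]
  rw [mul_eq_one_comm, fromBlocks_multiply, ← fromBlocks_one, fromBlocks_inj] at key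
  obtain ⟨k1, k2, k3, k4⟩ := key
  refine ⟨?_, ?_, ?_⟩
  · rw [neg_mul, neg_add_eq_zero] at k3; exact k3.symm
  · rw [neg_mul, ← sub_eq_add_neg, sub_eq_zero] at k2; exact k2.symm
  · rw [← k1]; simp [sub_eq_add_neg]

lemma wronsk {a b c d : M m} (r1 : aᵀ * c = cᵀ * a) (r2 : bᵀ * d = dᵀ * b)
    (r3 : dᵀ * a - bᵀ * c = 1) (z w : M m) (hw : wᵀ = w) :
    (c * w + d)ᵀ * (a * z + b) - (a * w + b)ᵀ * (c * z + d) = z - w := by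
  have r4 : aᵀ * d - cᵀ * b = 1 := by
    have := congrArg transpose r3
    simpa using this
  have e : (c * w + d)ᵀ * (a * z + b) - (a * w + b)ᵀ * (c * z + d)
      = w * (cᵀ * a - aᵀ * c) * z + (dᵀ * a - bᵀ * c) * z - w * (aᵀ * d - cᵀ * b)
        + (dᵀ * b - bᵀ * d) := by
    simp only [transpose_add, transpose_mul, hw]
    noncomm_ring
  rw [e, r1, r2, r3, r4]; simp

lemma diff {a b c d : M m} (r1 : aᵀ * c = cᵀ * a) (r2 : bᵀ * d = dᵀ * b)
    (r3 : dᵀ * a - bᵀ * c = 1) (z w : M m) (hw : wᵀ = w)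
    (uz : IsUnit (c * z + d).det) (uw : IsUnit (c * w + d).det) :
    (a * z + b) * (c * z + d)⁻¹ - (a * w + b) * (c * w + d)⁻¹
      = ((c * w + d)ᵀ)⁻¹ * (z - w) * (c * z + d)⁻¹ := by
  have h1 := wronsk r1 r2 r3 z w hw
  have h2 := wronsk r1 r2 r3 w w hw
  rw [sub_self] at h2
  generalize a * z + b = nz at *
  generalize a * w + b = nw at *
  generalize c * z + d = jz at *
  generalize c * w + d = jw at *
  have uwt : IsUnit (jwᵀ).det := by rwa [det_transpose]
  have h3 : nw * jw⁻¹ = (jwᵀ)⁻¹ * nwᵀ := by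
    have : jwᵀ * (nw * jw⁻¹) = nwᵀ := by
      rw [← mul_assoc, sub_eq_zero.mp h2, mul_assoc, mul_nonsing_inv _ uw, mul_one]
    rw [← this, ← mul_assoc, nonsing_inv_mul _ uwt, one_mul]
  rw [h3, ← h1, mul_sub, sub_mul, ← mul_assoc, nonsing_inv_mul _ uwt, one_mul]
  congr 1
  rw [mul_assoc, mul_assoc, mul_nonsing_inv _ uz, mul_one]

open scoped ComplexOrder MatrixOrder Matrix.Norms.L2Operator in
lemma posDef_cx {v : Matrix (Fin m) (Fin m) ℝ} (hv : v.PosDef) (ξ : Fin m → ℂ)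
    (h : star ξ ⬝ᵥ (cx v *ᵥ ξ) = 0) : ξ = 0 := by
  obtain ⟨B, hB⟩ : ∃ B, v = Bᴴ * B :=
    CStarAlgebra.nonneg_iff_eq_star_mul_self.mp hv.posSemidef.nonneg
  have hBu : IsUnit B.det := by
    have := hv.det_pos
    rw [hB, det_mul] at this
    exact (right_ne_zero_of_mul this.ne').isUnit
  have e : cx v = (cx B)ᴴ * cx B := by
    rw [hB, cx_mul]
    congr 1
    ext i j; simp
  have h0 : cx B *ᵥ ξ = 0 := by
    rw [e, ← mulVec_mulVec, dotProduct_mulVec, ← star_mulVec] at h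
    exact dotProduct_star_self_eq_zero.mp h
  have : cx B⁻¹ *ᵥ (cx B *ᵥ ξ) = ξ := by
    rw [mulVec_mulVec, ← cx_mul, nonsing_inv_mul _ hBu, cx_one, one_mulVec]
  rw [← this, h0, mulVec_zero]

lemma sh_symm {x : M m} (hx : inSH x) : xᵀ = x := by
  obtain ⟨u, v, hu, hv, rfl⟩ := hx
  have hvt : vᵀ = v := by simpa using hv.isHermitian.eq
  rw [transpose_add, transpose_smul, ← transpose_map, ← transpose_map, hu, hvt]

lemma conj_symm {x : M m} (hx : xᵀ = x) : (conjM x)ᵀ = conjM x := by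
  unfold conjM; rw [← transpose_map, hx]

lemma sh_unit {a b c d : Matrix (Fin m) (Fin m) ℝ}
    (r1 : (cx a)ᵀ * cx c = (cx c)ᵀ * cx a) (r2 : (cx b)ᵀ * cx d = (cx d)ᵀ * cx b)
    (r3 : (cx d)ᵀ * cx a - (cx b)ᵀ * cx c = 1) {x : M m} (hx : inSH x) :
    IsUnit (cx c * x + cx d).det := by
  have hxs := sh_symm hx
  have hw := wronsk r1 r2 r3 x (conjM x) (conj_symm hxs)
  have hH : (cx c * conjM x + cx d)ᵀ = (cx c * x + cx d)ᴴ := by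
    rw [← conjM_cx c, ← conjM_cx d, ← conjM_mul, ← conjM_add, conjM_eq, conjM_cx, conjM_cx,
      transpose_transpose]
  rw [hH] at hw
  obtain ⟨u, v, hu, hv, hxe⟩ := hx
  have hd : x - conjM x = (2 * Complex.I) • cx v := by
    rw [hxe]; ext i j; simp [conjM]; ring
  rw [hd] at hw
  by_contra hn
  have hdet : (cx c * x + cx d).det = 0 := by
    by_contra h; exact hn (Ne.isUnit h)
  obtain ⟨ξ, hξ, hξ0⟩ := exists_mulVec_eq_zero_iff.mpr hdet
  apply hξ
  apply posDef_cx hv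
  have h5 := congrArg (fun A => star ξ ⬝ᵥ (A *ᵥ ξ)) hw
  simp only [sub_mulVec, ← mulVec_mulVec, hξ0, mulVec_zero, sub_zero] at h5
  rw [dotProduct_mulVec, ← star_mulVec, hξ0, star_zero, zero_dotProduct, smul_mulVec,
    dotProduct_smul, smul_eq_mul] at h5
  have := mul_eq_zero.mp h5.symm
  simpa using this

lemma conj_unit {c d : Matrix (Fin m) (Fin m) ℝ} {x : M m}
    (h : IsUnit (cx c * x + cx d).det) : IsUnit (cx c * conjM x + cx d).det := by
  have : cx c * conjM x + cx d = ((cx c * x + cx d)ᴴ)ᵀ := by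
    rw [← conjM_eq, conjM_add, conjM_mul, conjM_cx, conjM_cx]
  rw [this, det_transpose, det_conjTranspose]
  exact h.star

lemma charpoly_conj (P A : M m) (hP : IsUnit P.det) : (P⁻¹ * A * P).charpoly = A.charpoly := by
  rw [charpoly_mul_comm, ← mul_assoc, mul_nonsing_inv _ hP, one_mul]

lemma main (s : Matrix (Fin m ⊕ Fin m) (Fin m ⊕ Fin m) ℝ) (hs : inSp s)
    (x y : M m) (hx : inSH x) (hy : inSH y) :
    (crossRatio (mobius s x) (mobius s y)).charpoly = (crossRatio x y).charpoly := by
  obtain ⟨h1, h2, h3⟩ := hs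
  replace h1 := congrArg cx h1
  replace h2 := congrArg cx h2
  replace h3 := congrArg cx h3
  simp only [cx_sub, cx_mul, cx_tr, cx_one] at h1 h2 h3
  obtain ⟨r1, r2, r3⟩ := rel h1 h2 h3
  have ux := sh_unit r1 r2 r3 hx
  have uy := sh_unit r1 r2 r3 hy
  have ux' := conj_unit ux
  have uy' := conj_unit uy
  have sy := sh_symm hy
  have sy' := conj_symm sy
  have d1 := diff r1 r2 r3 x y sy ux uy
  have d2 := diff r1 r2 r3 x (conjM y) sy' ux uy'
  have d3 := diff r1 r2 r3 (conjM x) (conjM y) sy' ux' uy'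
  have d4 := diff r1 r2 r3 (conjM x) y sy ux' uy
  unfold crossRatio
  rw [conjM_mobius, conjM_mobius]
  unfold mobius
  rw [d1, d2, d3, d4]
  generalize cx s.toBlocks₂₁ * x + cx s.toBlocks₂₂ = jx at *
  generalize cx s.toBlocks₂₁ * y + cx s.toBlocks₂₂ = jy at *
  generalize cx s.toBlocks₂₁ * conjM x + cx s.toBlocks₂₂ = jx' at *
  generalize cx s.toBlocks₂₁ * conjM y + cx s.toBlocks₂₂ = jy' at *
  have uyt : IsUnit (jyᵀ).det := by rwa [det_transpose]
  have uyt' : IsUnit (jy'ᵀ).det := by rwa [det_transpose]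
  rw [← charpoly_conj jyᵀ (_ * (x - conjM y)⁻¹ * _ * _) uyt]
  simp only [Matrix.mul_inv_rev, nonsing_inv_nonsing_inv _ ux, nonsing_inv_nonsing_inv _ ux',
    nonsing_inv_nonsing_inv _ uyt, nonsing_inv_nonsing_inv _ uyt', mul_assoc]
  simp only [nonsing_inv_mul_cancel_left _ _ ux, nonsing_inv_mul_cancel_left _ _ ux',
    mul_nonsing_inv_cancel_left _ _ uyt', mul_nonsing_inv_cancel_left _ _ uyt]

end SiegelAux

/-- the characteristic polynomial of the cross-ratio, and hence
the Siegel distance, is invariant under the symplectic Möbius action. -/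
theorem siegel_distance_symplectic_invariance (m : ℕ) (hm : 1 ≤ m)
    (s : Matrix (Fin m ⊕ Fin m) (Fin m ⊕ Fin m) ℝ) (hs : inSp s)
    (x y : Matrix (Fin m) (Fin m) ℂ) (hx : inSH x) (hy : inSH y) :
    (crossRatio (mobius s x) (mobius s y)).charpoly = (crossRatio x y).charpoly ∧
    dSH (mobius s x) (mobius s y) = dSH x y := by
  have h := SiegelAux.main s hs x y hx hy
  refine ⟨h, ?_⟩
  unfold dSH
  rw [h]
end

section
/- Let m ≥ 1 and x, y ∈ SH_m. Then the multiset of eigenvalues (roots of the characteristic polynomial over ℂ, with multiplicity) of the cross-ratio matrix R(x,y) equals that of R(y,x); consequently the Siegel distance is symmetric: d_SH(x, y) = d_SH(y, x). -/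
open Matrix

theorem neg_inv_aux {m : ℕ} (A : Matrix (Fin m) (Fin m) ℂ) : (-A)⁻¹ = -A⁻¹ := by
  by_cases h : IsUnit A.det
  · apply Matrix.inv_eq_right_inv
    rw [neg_mul_neg, Matrix.mul_nonsing_inv _ h]
  · rw [Matrix.nonsing_inv_apply_not_isUnit _ h, Matrix.nonsing_inv_apply_not_isUnit, neg_zero]
    intro h2
    apply h
    have h3 := (Matrix.isUnit_iff_isUnit_det _).2 h2
    exact (Matrix.isUnit_iff_isUnit_det _).1 (by simpa using h3.neg)

theorem charpoly_aux {m : ℕ} (x y : Matrix (Fin m) (Fin m) ℂ) (hx : xᵀ = x) (hy : yᵀ = y) :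
    (crossRatio x y).charpoly = (crossRatio y x).charpoly := by
  have cx : (conjM x)ᵀ = conjM x := by
    unfold conjM; rw [← Matrix.transpose_map, hx]
  have cy : (conjM y)ᵀ = conjM y := by
    unfold conjM; rw [← Matrix.transpose_map, hy]
  rw [← Matrix.charpoly_transpose]
  unfold crossRatio
  rw [← neg_sub x y, ← neg_sub (conjM x) y, ← neg_sub (conjM x) (conjM y),
    ← neg_sub x (conjM y), neg_inv_aux, neg_inv_aux]
  simp only [Matrix.transpose_mul, Matrix.transpose_nonsing_inv, Matrix.transpose_sub,
    hx, hy, cx, cy, neg_mul_neg, neg_mul, mul_neg, neg_neg]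
  rw [← Matrix.mul_assoc, ← Matrix.mul_assoc, Matrix.charpoly_mul_comm]
  simp only [Matrix.mul_assoc]

/-- the multiset of eigenvalues of R(x,y) equals that of R(y,x);
consequently the Siegel distance is symmetric. -/
theorem siegel_distance_symmetric (m : ℕ) (hm : 1 ≤ m)
    (u v u' v' : Matrix (Fin m) (Fin m) ℝ)
    (hu : uᵀ = u) (hv : v.PosDef) (hu' : u'ᵀ = u') (hv' : v'.PosDef)
    (x y : Matrix (Fin m) (Fin m) ℂ)
    (hx : x = u.map ((↑) : ℝ → ℂ) + Complex.I • v.map ((↑) : ℝ → ℂ))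
    (hy : y = u'.map ((↑) : ℝ → ℂ) + Complex.I • v'.map ((↑) : ℝ → ℂ)) :
    (crossRatio x y).charpoly.roots = (crossRatio y x).charpoly.roots ∧
    dSH x y = dSH y x := by
  have tx : xᵀ = x := by
    rw [hx, Matrix.transpose_add, Matrix.transpose_smul, ← Matrix.transpose_map,
      ← Matrix.transpose_map, hu, show vᵀ = v by simpa using hv.isHermitian.eq]
  have ty : yᵀ = y := by
    rw [hy, Matrix.transpose_add, Matrix.transpose_smul, ← Matrix.transpose_map,
      ← Matrix.transpose_map, hu', show v'ᵀ = v' by simpa using hv'.isHermitian.eq]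
  have h := charpoly_aux x y tx ty
  refine ⟨by rw [h], ?_⟩
  unfold dSH
  rw [h]
end

section
/- Let m ≥ 1. There exists a constant c > 0 (depending only on m) such that for all x, y ∈ SH_m, the Frobenius norm of log(φ(x)^{-1} φ(y) φ(y)ᵀ φ(x)^{-ᵀ}) equals c · d_SH(x, y); i.e., the norm ‖⊖x ⊕ y‖_S induced by the quotient-structure inner product is proportional to the Siegel Riemannian distance. (First part of Proposition 1.) -/
open Matrix

/-- The Frobenius norm. -/
noncomputable def frobNorm {n : Type*} [Fintype n] (A : Matrix n n ℝ) : ℝ :=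
  Real.sqrt (Matrix.trace (Aᵀ * A))


lemma spec_aux {n : Type*} [Fintype n] [DecidableEq n] (L : Matrix n n ℝ) (hL : Lᵀ = L) :
    ∃ (U V : Matrix n n ℝ) (l : n → ℝ), U * V = 1 ∧ V * U = 1 ∧ L = U * diagonal l * V ∧
      NormedSpace.exp L = U * diagonal (fun i => Real.exp (l i)) * V := by
  have hH : L.IsHermitian := by
    rw [Matrix.IsHermitian, Matrix.conjTranspose_eq_transpose_of_trivial]; exact hL
  set U : Matrix n n ℝ := (hH.eigenvectorUnitary).1 with hU
  have h1 : U * star U = 1 := by simp [hU]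
  have h2 : star U * U = 1 := by simp [hU]
  have hs : L = U * diagonal hH.eigenvalues * star U := by
    conv_lhs => rw [hH.spectral_theorem]
    simp [Unitary.conjStarAlgAut_apply, hU]
  have hinv : U⁻¹ = star U := Matrix.inv_eq_right_inv h1
  refine ⟨U, star U, hH.eigenvalues, h1, h2, hs, ?_⟩
  conv_lhs => rw [hs]
  rw [← hinv, Matrix.exp_conj _ _ (IsUnit.of_mul_eq_one _ h1), Matrix.exp_diagonal]
  congr 3
  funext i
  rw [Real.exp_eq_exp_ℝ, Pi.coe_exp]

lemma t_aux (l : ℝ) : (Real.log ((1 + Real.sqrt (((Real.exp l - 1)/(Real.exp l + 1))^2)) /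
    (1 - Real.sqrt (((Real.exp l - 1)/(Real.exp l + 1))^2)))) ^ 2 = l ^ 2 := by
  rw [Real.sqrt_sq_eq_abs]
  have h := Real.exp_pos l
  rcases le_total 0 l with hl | hl
  · have : 1 ≤ Real.exp l := Real.one_le_exp hl
    rw [abs_of_nonneg (div_nonneg (by linarith) (by linarith))]
    have : (1 + (Real.exp l - 1)/(Real.exp l + 1)) / (1 - (Real.exp l - 1)/(Real.exp l + 1))
        = Real.exp l := by
      have h3 : (1 - (Real.exp l - 1)/(Real.exp l + 1)) = 2 / (Real.exp l + 1) := by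
        field_simp; ring
      rw [h3]; field_simp; ring
    rw [this, Real.log_exp]
  · have : Real.exp l ≤ 1 := Real.exp_le_one_iff.mpr hl
    rw [abs_of_nonpos (div_nonpos_of_nonpos_of_nonneg (by linarith) (by linarith))]
    have : (1 + -((Real.exp l - 1)/(Real.exp l + 1))) / (1 - -((Real.exp l - 1)/(Real.exp l + 1)))
        = Real.exp (-l) := by
      have h3 : (1 - -((Real.exp l - 1)/(Real.exp l + 1))) = 2 * Real.exp l / (Real.exp l + 1) := by
        field_simp; ring
      rw [h3, Real.exp_neg]; field_simp; ring
    rw [this, Real.log_exp]; ring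

lemma char_conj {n : Type*} [Fintype n] [DecidableEq n] {U V A : Matrix n n ℂ} (h : V * U = 1) :
    (U * A * V).charpoly = A.charpoly := by
  rw [Matrix.charpoly_mul_comm, ← Matrix.mul_assoc, h, one_mul]

lemma blockK {n : Type*} [Fintype n] [DecidableEq n] (u v w : Matrix n n ℂ) (hvw : v * w = 1)
    (hwv : w * v = 1) :
    fromBlocks 1 (-(u - Complex.I • v)) (-1) (u + Complex.I • v) *
      fromBlocks (v + u * w * u) (u * w) (w * u) w * fromBlocks 0 1 (-1) 0 =
    fromBlocks (-Complex.I • 1) 0 0 (Complex.I • 1) *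
      fromBlocks 1 (-(u - Complex.I • v)) (-1) (u + Complex.I • v) := by
  simp only [fromBlocks_multiply]
  have e : Complex.I * Complex.I = -1 := Complex.I_mul_I
  have e1 : v * (w * u) = u := by rw [← mul_assoc, hvw, one_mul]
  congr 1 <;> simp [add_mul, mul_add, sub_mul, mul_sub, mul_assoc, hvw, e1, smul_smul, smul_add, smul_sub, e] <;> abel

lemma blockM {n : Type*} [Fintype n] [DecidableEq n] (u v w : Matrix n n ℂ) (hvw : v * w = 1)
    (hwv : w * v = 1) :
      fromBlocks (v + u * w * u) (u * w) (w * u) w * fromBlocks 0 1 (-1) 0 *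
      fromBlocks (u + Complex.I • v) (u - Complex.I • v) 1 1 =
      fromBlocks (u + Complex.I • v) (u - Complex.I • v) 1 1 *
    fromBlocks (-Complex.I • 1) 0 0 (Complex.I • 1)  := by
  simp only [fromBlocks_multiply]
  have e : Complex.I * Complex.I = -1 := Complex.I_mul_I
  have e1 : v * (w * u) = u := by rw [← mul_assoc, hvw, one_mul]
  congr 1 <;> simp [add_mul, mul_add, sub_mul, mul_sub, mul_assoc, hvw, hwv, e1, smul_smul, smul_add, smul_sub, e] <;> abel

lemma char_X {n : Type*} [Fintype n] [DecidableEq n] (A B C E : Matrix n n ℂ)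
    (X : Matrix (n ⊕ n) (n ⊕ n) ℂ) (hA : IsUnit A.det) (hE : IsUnit E.det)
    (hX : X * fromBlocks (-(2 * Complex.I) • A) 0 0 ((2 * Complex.I) • E) =
      fromBlocks 0 ((2 * Complex.I) • B) (-(2 * Complex.I) • C) 0) :
    (X * X).charpoly = (B * E⁻¹ * C * A⁻¹).charpoly ^ 2 := by
  have hc : (2 * Complex.I) ≠ 0 := by simp
  generalize 2 * Complex.I = c at hc hX
  have hX' : X = fromBlocks 0 (B * E⁻¹) (C * A⁻¹) 0 := by
    have := congrArg (· * fromBlocks (-c⁻¹ • A⁻¹) 0 0 (c⁻¹ • E⁻¹)) hX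
    simp only [mul_assoc, fromBlocks_multiply] at this
    simpa [smul_smul, hc, Matrix.mul_nonsing_inv _ hA, Matrix.mul_nonsing_inv _ hE] using this
  rw [hX', fromBlocks_multiply]
  simp only [zero_mul, mul_zero, add_zero, zero_add]
  rw [charpoly_fromBlocks_zero₁₂, charpoly_mul_comm (C * A⁻¹), sq, mul_assoc, mul_assoc, mul_assoc]

lemma char_cross {n : Type*} [Fintype n] [DecidableEq n] (A B C E : Matrix n n ℂ)
    (hA : Aᵀ = A) (hB : Bᵀ = B) (hC : Cᵀ = C) (hE : Eᵀ = E) :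
    (C * E⁻¹ * B * A⁻¹).charpoly = (B * E⁻¹ * C * A⁻¹).charpoly := by
  rw [← charpoly_transpose]
  simp only [transpose_mul, transpose_nonsing_inv, hA, hB, hC, hE]
  rw [charpoly_mul_comm]
  simp only [mul_assoc]

lemma core_s12 {n : Type*} [Fintype n] [DecidableEq n] (u v w u' v' w' : Matrix n n ℂ)
    (hvw : v * w = 1) (hwv : w * v = 1) (hvw' : v' * w' = 1) (hwv' : w' * v' = 1)
    (hu : uᵀ = u) (hv : vᵀ = v) (hu' : u'ᵀ = u') (hv' : v'ᵀ = v')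
    (F Fi Ft Fti P T Q : Matrix (n ⊕ n) (n ⊕ n) ℂ)
    (hFi : F * Fi = 1) (hFi' : Fi * F = 1) (hFt : Ft * Fti = 1)
    (hS : F * Ft = fromBlocks (v + u * w * u) (u * w) (w * u) w)
    (hS' : F * P * Ft = fromBlocks (v' + u' * w' * u') (u' * w') (w' * u') w')
    (hT : T * (P + 1) = P - 1) (hQ : (P + 1) * Q = 1) (x xb y yb : Matrix n n ℂ)
    (hx : x = u + Complex.I • v) (hxb : xb = u - Complex.I • v)
    (hy : y = u' + Complex.I • v') (hyb : yb = u' - Complex.I • v') :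
    (T * T).charpoly = ((x - y) * (x - yb)⁻¹ * (xb - yb) * (xb - y)⁻¹).charpoly ^ 2 := by
  set Sx := fromBlocks (v + u * w * u) (u * w) (w * u) w with hSx
  set Sy := fromBlocks (v' + u' * w' * u') (u' * w') (w' * u') w' with hSy
  set K : Matrix (n ⊕ n) (n ⊕ n) ℂ := fromBlocks 1 (-xb) (-1) x with hK
  set M : Matrix (n ⊕ n) (n ⊕ n) ℂ := fromBlocks y yb 1 1 with hM
  set J : Matrix (n ⊕ n) (n ⊕ n) ℂ := fromBlocks 0 1 (-1) 0 with hJ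
  set D : Matrix (n ⊕ n) (n ⊕ n) ℂ := fromBlocks (-Complex.I • 1) 0 0 (Complex.I • 1) with hD
  have b1 : K * Sx * J = D * K := by
    have := blockK u v w hvw hwv
    rw [← hx, ← hxb] at this
    exact this
  have b2 : Sy * J * M = M * D := by
    have := blockM u' v' w' hvw' hwv'
    rw [← hy, ← hyb] at this
    exact this
  have c0 : (2 * Complex.I) ≠ 0 := by simp
  have hv1 : IsUnit v.det := by
    rw [← Matrix.isUnit_iff_isUnit_det]; exact IsUnit.of_mul_eq_one _ hvw
  have hv1' : IsUnit v'.det := by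
    rw [← Matrix.isUnit_iff_isUnit_det]; exact IsUnit.of_mul_eq_one _ hvw'
  have key : ∀ (a b : Matrix n n ℂ) (c : Matrix n n ℂ), a * c = 1 →
      fromBlocks 1 (-(b - Complex.I • a)) (-1) (b + Complex.I • a) *
      fromBlocks (b + Complex.I • a) (b - Complex.I • a) 1 1 *
      fromBlocks ((2 * Complex.I)⁻¹ • c) 0 0 ((2 * Complex.I)⁻¹ • c) = 1 := by
    intro a b c hac
    have h2 : (b + Complex.I • a) - (b - Complex.I • a) = (2 * Complex.I) • a := by
      rw [two_mul, add_smul]; abel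
    simp only [fromBlocks_multiply, ← fromBlocks_one]
    have h3 : (1 * (b + Complex.I • a) + -(b - Complex.I • a) * 1) = (2 * Complex.I) • a := by
      rw [← h2]; simp only [mul_one, one_mul]; abel
    have h4 : (-1 * (b - Complex.I • a) + (b + Complex.I • a) * 1) = (2 * Complex.I) • a := by
      rw [← h2]; simp only [mul_one, neg_mul, one_mul]; abel
    rw [h3, h4]
    congr 1 <;> simp only [smul_mul_smul_comm, mul_inv_cancel₀ c0, hac, one_smul, mul_zero, zero_mul, add_zero, zero_add] <;> simp
  have kx := key v u w hvw
  rw [← hx, ← hxb] at kx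
  have ky := key v' u' w' hvw'
  rw [← hy, ← hyb] at ky
  rw [mul_assoc] at kx
  obtain ⟨Ki, hKi⟩ : ∃ Ki, K * Ki = 1 := ⟨_, kx⟩
  have hKi' : Ki * K = 1 := mul_eq_one_comm.mp hKi
  have hMu : IsUnit M.det := by
    have h5 := congrArg det ky
    rw [det_mul, det_mul, det_one] at h5
    refine isUnit_iff_ne_zero.mpr fun h0 => ?_
    have : det (fromBlocks y yb 1 1 : Matrix (n ⊕ n) (n ⊕ n) ℂ) = 0 := h0
    rw [this] at h5; simp at h5
  have hJ1 : J * fromBlocks 0 (-1) 1 0 = 1 := by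
    rw [hJ, fromBlocks_multiply, ← fromBlocks_one]; congr 1 <;> simp
  have det_u : ∀ {k : Type _} [Fintype k] [DecidableEq k] {a b : Matrix k k ℂ}, a * b = 1 → IsUnit a.det := by
    intro k _ _ a b hab
    rw [← Matrix.isUnit_iff_isUnit_det]; exact IsUnit.of_mul_eq_one _ hab
  have hN : K * M = fromBlocks (y - xb) (yb - xb) (x - y) (x - yb) := by
    rw [hK, hM, fromBlocks_multiply]; congr 1 <;> simp <;> abel
  have hplus : K * (Sy + Sx) * J * M =
      fromBlocks (-(2 * Complex.I) • (y - xb)) 0 0 ((2 * Complex.I) • (x - yb)) := by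
    have : K * (Sy + Sx) * J * M = (K * M) * D + D * (K * M) := by
      calc _ = K * (Sy * J * M) + K * Sx * J * M := by noncomm_ring
        _ = _ := by rw [b1, b2]; noncomm_ring
    rw [this, hN, hD, fromBlocks_multiply, fromBlocks_multiply, fromBlocks_add]
    congr 1 <;> simp [two_mul, add_smul, neg_smul, add_comm]
  have hminus : K * (Sy - Sx) * J * M =
      fromBlocks 0 ((2 * Complex.I) • (yb - xb)) (-(2 * Complex.I) • (x - y)) 0 := by
    have : K * (Sy - Sx) * J * M = (K * M) * D - D * (K * M) := by
      calc _ = K * (Sy * J * M) - K * Sx * J * M := by noncomm_ring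
        _ = _ := by rw [b1, b2]; noncomm_ring
    rw [this, hN, hD, fromBlocks_multiply, fromBlocks_multiply, sub_eq_add_neg, fromBlocks_neg, fromBlocks_add]
    congr 1 <;> simp [two_mul, add_smul, neg_smul, sub_smul, ← sub_eq_add_neg]
  have hsum : Sy + Sx = F * (P + 1) * Ft := by rw [← hS, ← hS']; noncomm_ring
  have hdif : Sy - Sx = F * (P - 1) * Ft := by rw [← hS, ← hS']; noncomm_ring
  have hdet : IsUnit (K * (Sy + Sx) * J * M).det := by
    rw [hsum]
    simp only [det_mul]
    exact (((det_u hKi).mul (((det_u hFi).mul (det_u hQ)).mul (det_u hFt))).mul (det_u hJ1)).mul hMu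
  have hAE : IsUnit (y - xb).det ∧ IsUnit (x - yb).det := by
    rw [hplus, det_fromBlocks_zero₁₂, det_smul, det_smul, IsUnit.mul_iff, IsUnit.mul_iff, IsUnit.mul_iff] at hdet
    exact ⟨hdet.1.2, hdet.2.2⟩
  have hX : (K * F * T * (Fi * Ki)) * fromBlocks (-(2 * Complex.I) • (y - xb)) 0 0 ((2 * Complex.I) • (x - yb))
     = fromBlocks 0 ((2 * Complex.I) • (yb - xb)) (-(2 * Complex.I) • (x - y)) 0 := by
    rw [← hplus, ← hminus, hsum, hdif]
    calc _ = K * F * T * (Fi * (Ki * K) * F) * (P + 1) * Ft * J * M := by noncomm_ring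
      _ = K * F * (T * (P + 1)) * Ft * J * M := by rw [hKi', mul_one, hFi']; noncomm_ring
      _ = _ := by rw [hT]; noncomm_ring
  have h9 := char_X _ _ _ _ _ hAE.1 hAE.2 hX
  have h10 : (K * F * T * (Fi * Ki)) * (K * F * T * (Fi * Ki)) = (K * F) * (T * T) * (Fi * Ki) := by
    calc _ = K * F * T * (Fi * (Ki * K) * F) * T * (Fi * Ki) := by noncomm_ring
      _ = _ := by rw [hKi', mul_one, hFi']; noncomm_ring
  have h11 : (Fi * Ki) * (K * F) = 1 := by
    calc _ = Fi * (Ki * K) * F := by noncomm_ring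
      _ = _ := by rw [hKi', mul_one, hFi']
  rw [h10, char_conj h11] at h9
  rw [h9, ← neg_sub yb xb, ← neg_sub y xb, ← char_cross]
  · have : (-(y - xb))⁻¹ = -(y - xb)⁻¹ := by
      apply Matrix.inv_eq_right_inv
      rw [neg_mul_neg, Matrix.mul_nonsing_inv _ hAE.1]
    rw [this]; simp only [mul_neg, neg_mul, neg_neg]
  all_goals simp [hx, hxb, hy, hyb, hu, hv, hu', hv']

lemma blockF {n : Type*} [Fintype n] [DecidableEq n] (u v r : Matrix n n ℝ) (hu : uᵀ = u)
    (hr : r.PosDef) (hrv : r * r = v) :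
    v * (r⁻¹ * r⁻¹) = 1 ∧
    IsUnit (fromBlocks r (u * r⁻¹) 0 r⁻¹).det ∧
    fromBlocks r (u * r⁻¹) 0 r⁻¹ * (fromBlocks r (u * r⁻¹) 0 r⁻¹)ᵀ =
      fromBlocks (v + u * (r⁻¹ * r⁻¹) * u) (u * (r⁻¹ * r⁻¹)) ((r⁻¹ * r⁻¹) * u) (r⁻¹ * r⁻¹) := by
  have hrt : rᵀ = r := by
    have := hr.isHermitian
    rwa [Matrix.IsHermitian, Matrix.conjTranspose_eq_transpose_of_trivial] at this
  have hd : IsUnit r.det := hr.det_pos.ne'.isUnit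
  refine ⟨?_, ?_, ?_⟩
  · rw [← hrv, mul_assoc, ← mul_assoc r r⁻¹, Matrix.mul_nonsing_inv _ hd, one_mul,
      Matrix.mul_nonsing_inv _ hd]
  · rw [det_fromBlocks_zero₂₁]
    exact hd.mul (Matrix.isUnit_nonsing_inv_det _ hd)
  · rw [fromBlocks_transpose, fromBlocks_multiply]
    simp only [transpose_mul, transpose_nonsing_inv, hrt, hu, hrv, transpose_zero, mul_zero,
      zero_mul, zero_add, mul_assoc]

lemma T_aux {n : Type*} [Fintype n] [DecidableEq n] (L : Matrix n n ℝ) (hL : Lᵀ = L) :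
    ∃ (T Q : Matrix n n ℝ) (l : n → ℝ), T * (NormedSpace.exp L + 1) = NormedSpace.exp L - 1 ∧
      (NormedSpace.exp L + 1) * Q = 1 ∧
      ((T.map ((↑) : ℝ → ℂ)) * (T.map ((↑) : ℝ → ℂ))).charpoly.roots =
        Finset.univ.val.map (fun i => (((((Real.exp (l i) - 1)/(Real.exp (l i) + 1))^2 : ℝ)) : ℂ)) ∧
      trace (Lᵀ * L) = ∑ i, l i ^ 2 := by
  obtain ⟨U, V, l, h1, h2, hLe, hP⟩ := spec_aux L hL
  have conj : ∀ a b : n → ℝ, (U * diagonal a * V) * (U * diagonal b * V) =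
      U * diagonal (fun i => a i * b i) * V := by
    intro a b
    calc _ = U * diagonal a * (V * U) * diagonal b * V := by noncomm_ring
      _ = _ := by rw [h2, mul_one, mul_assoc U, diagonal_mul_diagonal]
  have one : (1 : Matrix n n ℝ) = U * diagonal (fun _ => 1) * V := by
    rw [diagonal_one, mul_one, h1]
  have hp : NormedSpace.exp L + 1 = U * diagonal (fun i => Real.exp (l i) + 1) * V := by
    rw [hP, one]
    rw [← add_mul, ← mul_add, diagonal_add]
  have hm : NormedSpace.exp L - 1 = U * diagonal (fun i => Real.exp (l i) - 1) * V := by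
    rw [hP, one]
    rw [← sub_mul, ← mul_sub, diagonal_sub]
  have hpos : ∀ i, Real.exp (l i) + 1 ≠ 0 := fun i => by positivity
  refine ⟨U * diagonal (fun i => (Real.exp (l i) - 1)/(Real.exp (l i) + 1)) * V,
    U * diagonal (fun i => (Real.exp (l i) + 1)⁻¹) * V, l, ?_, ?_, ?_, ?_⟩
  · rw [hp, hm, conj]
    simp only [div_mul_cancel₀ _ (hpos _)]
  · rw [hp, conj, one]
    simp only [mul_inv_cancel₀ (hpos _)]
  · have e : ∀ A : Matrix n n ℝ, A.map ((↑) : ℝ → ℂ) = Complex.ofRealHom.mapMatrix A := fun _ => rfl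
    rw [e, ← map_mul, conj, map_mul, map_mul, char_conj (by rw [← map_mul, h2, map_one])]
    have : Complex.ofRealHom.mapMatrix (diagonal fun i => (Real.exp (l i) - 1) / (Real.exp (l i) + 1) * ((Real.exp (l i) - 1) / (Real.exp (l i) + 1)))
       = diagonal (fun i => (((((Real.exp (l i) - 1)/(Real.exp (l i) + 1))^2 : ℝ)) : ℂ)) := by
      rw [RingHom.mapMatrix_apply, diagonal_map (by simp)]
      congr 1; funext i; simp [sq]
    rw [this, charpoly_diagonal]
    have h := Polynomial.roots_multiset_prod_X_sub_C (Finset.univ.val.map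
      (fun i => (((((Real.exp (l i) - 1)/(Real.exp (l i) + 1))^2 : ℝ)) : ℂ)))
    rw [Multiset.map_map] at h
    exact h
  · rw [hL, hLe, conj, trace_mul_comm, ← mul_assoc, h2, one_mul, trace_diagonal]
    simp [sq]

/-- first part of Proposition 1: there is a constant c > 0,
depending only on m, such that for all x = u + iv and y = u' + iv' in the
Siegel upper half space (with symplectic representatives φ(x), φ(y) built
from the square roots r, r' of v, v'), the Frobenius norm of the principal
logarithm L of φ(x)⁻¹ φ(y) φ(y)ᵀ φ(x)⁻ᵀ equals c · d_SH(x,y). -/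
theorem quotient_norm_proportional_to_siegel_distance (m : ℕ) (hm : 1 ≤ m) :
    ∃ c : ℝ, 0 < c ∧
      ∀ (u v u' v' : Matrix (Fin m) (Fin m) ℝ),
        uᵀ = u → v.PosDef → u'ᵀ = u' → v'.PosDef →
      ∀ (x y : Matrix (Fin m) (Fin m) ℂ),
        x = u.map ((↑) : ℝ → ℂ) + Complex.I • v.map ((↑) : ℝ → ℂ) →
        y = u'.map ((↑) : ℝ → ℂ) + Complex.I • v'.map ((↑) : ℝ → ℂ) →
      ∀ (r r' : Matrix (Fin m) (Fin m) ℝ),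
        r.PosDef → r * r = v → r'.PosDef → r' * r' = v' →
      ∀ L : Matrix (Fin m ⊕ Fin m) (Fin m ⊕ Fin m) ℝ,
        Lᵀ = L →
        NormedSpace.exp L =
          (Matrix.fromBlocks r (u * r⁻¹) 0 r⁻¹)⁻¹ *
            (Matrix.fromBlocks r' (u' * r'⁻¹) 0 r'⁻¹) *
            (Matrix.fromBlocks r' (u' * r'⁻¹) 0 r'⁻¹)ᵀ *
            ((Matrix.fromBlocks r (u * r⁻¹) 0 r⁻¹)⁻¹)ᵀ →
        frobNorm L = c * dSH x y := by
  refine ⟨Real.sqrt 2, by positivity, ?_⟩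
  intro u v u' v' hu hv hu' hv' x y hx hy r r' hr hrv hr' hrv' L hL hexp
  obtain ⟨w1, dF, hS⟩ := blockF u v r hu hr hrv
  obtain ⟨w1', -, hS'⟩ := blockF u' v' r' hu' hr' hrv'
  obtain ⟨T, Q, l, hT, hQ, hroots, htr⟩ := T_aux L hL
  have sym : ∀ a : Matrix (Fin m) (Fin m) ℝ, a.PosDef → aᵀ = a := by
    intro a ha
    have := ha.isHermitian
    rwa [Matrix.IsHermitian, Matrix.conjTranspose_eq_transpose_of_trivial] at this
  set F := fromBlocks r (u * r⁻¹) 0 r⁻¹ with hF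
  set G := fromBlocks r' (u' * r'⁻¹) 0 r'⁻¹ with hG
  have hFi : F * F⁻¹ = 1 := Matrix.mul_nonsing_inv _ dF
  have hFi' : F⁻¹ * F = 1 := Matrix.nonsing_inv_mul _ dF
  have hFt : Fᵀ * (F⁻¹)ᵀ = 1 := by rw [← transpose_mul, hFi', transpose_one]
  have hFt' : (F⁻¹)ᵀ * Fᵀ = 1 := by rw [← transpose_mul, hFi, transpose_one]
  have hPS : F * NormedSpace.exp L * Fᵀ = G * Gᵀ := by
    rw [hexp]
    calc _ = (F * F⁻¹) * G * Gᵀ * ((F⁻¹)ᵀ * Fᵀ) := by simp only [mul_assoc]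
      _ = _ := by rw [hFi, hFt', one_mul, mul_one]
  rw [hS'] at hPS
  set f := (Complex.ofRealHom.mapMatrix : Matrix (Fin m) (Fin m) ℝ →+* _) with hf
  set g := (Complex.ofRealHom.mapMatrix : Matrix (Fin m ⊕ Fin m) (Fin m ⊕ Fin m) ℝ →+* _) with hg
  have gb : ∀ a b c d, g (fromBlocks a b c d) = fromBlocks (f a) (f b) (f c) (f d) := by
    intro a b c d
    exact fromBlocks_map _ _ _ _ _
  have ft : ∀ a, aᵀ = a → (f a)ᵀ = f a := by
    intro a ha
    conv_rhs => rw [← ha]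
    rfl
  have cj : ∀ a b : Matrix (Fin m) (Fin m) ℝ, conjM (f a + Complex.I • f b) = f a - Complex.I • f b := by
    intro a b
    ext i j
    simp [conjM, f, sub_eq_add_neg]
  have hx' : x = f u + Complex.I • f v := hx
  have hy' : y = f u' + Complex.I • f v' := hy
  have hcore := core_s12 (f u) (f v) (f (r⁻¹ * r⁻¹)) (f u') (f v') (f (r'⁻¹ * r'⁻¹))
    (by rw [← map_mul, w1, map_one]) (by rw [← map_mul, mul_eq_one_comm.mp w1, map_one])
    (by rw [← map_mul, w1', map_one]) (by rw [← map_mul, mul_eq_one_comm.mp w1', map_one])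
    (ft _ hu) (ft _ (sym _ hv)) (ft _ hu') (ft _ (sym _ hv'))
    (g F) (g F⁻¹) (g Fᵀ) (g (F⁻¹)ᵀ) (g (NormedSpace.exp L)) (g T) (g Q)
    (by rw [← map_mul, hFi, map_one]) (by rw [← map_mul, hFi', map_one])
    (by rw [← map_mul, hFt, map_one])
    (by rw [← map_mul, hS, gb]; simp only [map_mul, map_add])
    (by rw [← map_mul, ← map_mul, hPS, gb]; simp only [map_mul, map_add])
    (by rw [← map_one g, ← map_add, ← map_mul, hT, map_sub])
    (by rw [← map_one g, ← map_add, ← map_mul, hQ])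
    x (conjM x) y (conjM y) hx' (by rw [hx', cj]) hy' (by rw [hy', cj])
  change (g T * g T).charpoly = (crossRatio x y).charpoly ^ 2 at hcore
  change (g T * g T).charpoly.roots = _ at hroots
  rw [hcore, Polynomial.roots_pow] at hroots
  have hsum := congrArg (fun s : Multiset ℂ => (s.map (fun z =>
    (Real.log ((1 + Real.sqrt z.re) / (1 - Real.sqrt z.re))) ^ 2)).sum) hroots
  simp only [Multiset.map_nsmul, Multiset.sum_nsmul, Multiset.map_map, Function.comp_def,
    Complex.ofReal_re, t_aux] at hsum
  rw [frobNorm, dSH, htr, ← Real.sqrt_mul (by norm_num)]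
  congr 1
  rw [nsmul_eq_mul] at hsum
  exact_mod_cast hsum.symm
end

section
/- Let m ≥ 1, let k ∈ Sp_{2m} ∩ O_{2m}, and let x, y ∈ SH_m. Then ⟨log(φ(k[x]) φ(k[x])ᵀ), log(φ(k[y]) φ(k[y])ᵀ)⟩ = ⟨log(φ(x) φ(x)ᵀ), log(φ(y) φ(y)ᵀ)⟩, where ⟨·,·⟩ is the Frobenius inner product and k[·] is the symplectic Möbius action; i.e., the inner product ⟨x,y⟩_S = ⟨log(φ(x)φ(x)ᵀ), log(φ(y)φ(y)ᵀ)⟩ on SH_m is invariant under the action of the stabilizer K = Sp_{2m} ∩ O_{2m}. (Second part of Proposition 1.) -/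
open Matrix

/-- The representative φ(u + iv) = [[r, u r⁻¹], [0, r⁻¹]], where r = v^{1/2}. -/
noncomputable def phiBlk {m : ℕ} (u r : Matrix (Fin m) (Fin m) ℝ) :
    Matrix (Fin m ⊕ Fin m) (Fin m ⊕ Fin m) ℝ :=
  Matrix.fromBlocks r (u * r⁻¹) 0 r⁻¹

/-- The Frobenius inner product ⟨A,B⟩ = Tr(AᵀB). -/
noncomputable def frobInner {n : Type*} [Fintype n] (A B : Matrix n n ℝ) : ℝ :=
  Matrix.trace (Aᵀ * B)

open scoped Matrix.Norms.L2Operator in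
theorem exp_inj_symm {n : Type*} [Fintype n] [DecidableEq n] (A B : Matrix n n ℝ)
    (hA : Aᵀ = A) (hB : Bᵀ = B) (h : NormedSpace.exp A = NormedSpace.exp B) : A = B := by
  have hA' : IsSelfAdjoint A := by
    rw [IsSelfAdjoint, star_eq_conjTranspose, conjTranspose_eq_transpose_of_trivial, hA]
  have hB' : IsSelfAdjoint B := by
    rw [IsSelfAdjoint, star_eq_conjTranspose, conjTranspose_eq_transpose_of_trivial, hB]
  rw [← CFC.log_exp A hA', ← CFC.log_exp B hB', h]

theorem realEqs {m : ℕ} (hm : 1 ≤ m) (a b c d u v u₁ v₁ : Matrix (Fin m) (Fin m) ℝ)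
    (hv₁ : v₁.PosDef)
    (h : (a.map ((↑) : ℝ → ℂ) * (u.map ((↑) : ℝ → ℂ) + Complex.I • v.map ((↑) : ℝ → ℂ)) + b.map ((↑) : ℝ → ℂ)) *
  (c.map ((↑) : ℝ → ℂ) * (u.map ((↑) : ℝ → ℂ) + Complex.I • v.map ((↑) : ℝ → ℂ)) + d.map ((↑) : ℝ → ℂ))⁻¹ = u₁.map ((↑) : ℝ → ℂ) + Complex.I • v₁.map ((↑) : ℝ → ℂ)) :
    a * u + b = u₁ * (c * u + d) - v₁ * (c * v) ∧ a * v = u₁ * (c * v) + v₁ * (c * u + d) := by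
  set W := c.map ((↑) : ℝ → ℂ) * (u.map ((↑) : ℝ → ℂ) + Complex.I • v.map ((↑) : ℝ → ℂ)) + d.map ((↑) : ℝ → ℂ) with hW
  have hdet : IsUnit W.det := by
    by_contra hn
    rw [nonsing_inv_apply_not_isUnit _ hn, mul_zero] at h
    have h0 := congrArg Complex.im (congrFun (congrFun h ⟨0, hm⟩) ⟨0, hm⟩)
    simp at h0
    have := hv₁.diag_pos (i := ⟨0, hm⟩)
    rw [← h0] at this
    exact lt_irrefl _ this
  have h2 := congrArg (· * W) h
  simp only [Matrix.mul_assoc, nonsing_inv_mul _ hdet, mul_one] at h2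
  have mm : ∀ p q : Matrix (Fin m) (Fin m) ℝ, p.map ((↑) : ℝ → ℂ) * q.map ((↑) : ℝ → ℂ) = (p * q).map ((↑) : ℝ → ℂ) := by
    intro p q
    exact (Matrix.map_mul (f := Complex.ofRealHom)).symm
  have key : (a * u + b).map ((↑) : ℝ → ℂ) + Complex.I • (a * v).map ((↑) : ℝ → ℂ)
     = (u₁ * (c * u + d) - v₁ * (c * v)).map ((↑) : ℝ → ℂ) + Complex.I • (u₁ * (c * v) + v₁ * (c * u + d)).map ((↑) : ℝ → ℂ) := by
    have ma : ∀ p q : Matrix (Fin m) (Fin m) ℝ, (p + q).map ((↑) : ℝ → ℂ) = p.map ((↑) : ℝ → ℂ) + q.map ((↑) : ℝ → ℂ) := by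
      intro p q; ext; simp
    have ms : ∀ p q : Matrix (Fin m) (Fin m) ℝ, (p - q).map ((↑) : ℝ → ℂ) = p.map ((↑) : ℝ → ℂ) - q.map ((↑) : ℝ → ℂ) := by
      intro p q; ext; simp
    rw [hW] at h2
    simp only [Matrix.mul_add, Matrix.add_mul, Matrix.mul_smul, Matrix.smul_mul, smul_add, smul_smul, Complex.I_mul_I, neg_smul, one_smul, mm, ma, ms] at h2 ⊢
    convert h2 using 1 <;> abel
  constructor
  · ext i j
    have := congrArg Complex.re (congrFun (congrFun key i) j)
    simp only [Matrix.add_apply, Matrix.smul_apply, Matrix.map_apply, Complex.add_re, smul_eq_mul, Complex.re_mul_ofReal, Complex.ofReal_re, Complex.I_re, zero_mul, add_zero] at this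
    exact this
  · ext i j
    have := congrArg Complex.im (congrFun (congrFun key i) j)
    simp only [Matrix.add_apply, Matrix.smul_apply, Matrix.map_apply, Complex.add_im, smul_eq_mul, Complex.im_mul_ofReal, Complex.ofReal_im, Complex.I_im, one_mul, zero_add] at this
    exact this

theorem phi_J {m : ℕ} (u v r : Matrix (Fin m) (Fin m) ℝ) (hu : uᵀ = u) (hr : r.PosDef) (h : r * r = v) :
   (fromBlocks r (u * r⁻¹) 0 r⁻¹) * (fromBlocks r (u * r⁻¹) 0 r⁻¹)ᵀ * fromBlocks 0 1 (-1) 0 * fromBlocks v u 0 1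
    = fromBlocks v u 0 1 * fromBlocks 0 1 (-1) 0 := by
  have ht : rᵀ = r := by have := hr.1; rwa [IsHermitian, conjTranspose_eq_transpose_of_trivial] at this
  have hd : IsUnit r.det := hr.det_pos.ne'.isUnit
  subst h
  simp only [fromBlocks_transpose, fromBlocks_multiply, transpose_mul, transpose_nonsing_inv, ht, hu, transpose_zero, mul_zero, zero_mul, zero_add, add_zero, mul_one, mul_neg, neg_mul, one_mul, neg_zero]
  have e1 : r⁻¹ * (r⁻¹ * (r * r)) = 1 := by
    rw [← Matrix.mul_assoc r⁻¹ r r, nonsing_inv_mul _ hd, one_mul, nonsing_inv_mul _ hd]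
  congr 1
  · simp only [Matrix.mul_assoc, e1, mul_one]
  · simp only [Matrix.mul_assoc, Matrix.add_mul]; abel
  · simp only [Matrix.mul_assoc, e1]
  · simp only [Matrix.mul_assoc]; abel

theorem conj_P {m : ℕ} (hm : 1 ≤ m)
    (k : Matrix (Fin m ⊕ Fin m) (Fin m ⊕ Fin m) ℝ)
    (hk : inSp k ∧ kᵀ * k = 1)
    (u v : Matrix (Fin m) (Fin m) ℝ)
    (hu : uᵀ = u) (hv : v.PosDef)
    (x : Matrix (Fin m) (Fin m) ℂ)
    (hx : x = u.map ((↑) : ℝ → ℂ) + Complex.I • v.map ((↑) : ℝ → ℂ))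
    (r : Matrix (Fin m) (Fin m) ℝ)
    (hr : r.PosDef ∧ r * r = v)
    (u₁ v₁ : Matrix (Fin m) (Fin m) ℝ)
    (hu₁ : u₁ᵀ = u₁) (hv₁ : v₁.PosDef)
    (hkx : mobius k x = u₁.map ((↑) : ℝ → ℂ) + Complex.I • v₁.map ((↑) : ℝ → ℂ))
    (r₁ : Matrix (Fin m) (Fin m) ℝ)
    (hr₁ : r₁.PosDef ∧ r₁ * r₁ = v₁) :
    phiBlk u₁ r₁ * (phiBlk u₁ r₁)ᵀ = k * (phiBlk u r * (phiBlk u r)ᵀ) * kᵀ := by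
  obtain ⟨⟨h1, h2, h3⟩, ho⟩ := hk
  subst hx
  obtain ⟨e1, e2⟩ := realEqs hm _ _ _ _ _ _ _ _ hv₁ hkx
  have p := phi_J u v r hu hr.1 hr.2
  have p₁ := phi_J u₁ v₁ r₁ hu₁ hr₁.1 hr₁.2
  change phiBlk u r * (phiBlk u r)ᵀ * _ * _ = _ at p
  change phiBlk u₁ r₁ * (phiBlk u₁ r₁)ᵀ * _ * _ = _ at p₁
  set P := phiBlk u r * (phiBlk u r)ᵀ
  set P₁ := phiBlk u₁ r₁ * (phiBlk u₁ r₁)ᵀ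
  set M : Matrix (Fin m ⊕ Fin m) (Fin m ⊕ Fin m) ℝ := fromBlocks v u 0 1 with hM
  set M₁ : Matrix (Fin m ⊕ Fin m) (Fin m ⊕ Fin m) ℝ := fromBlocks v₁ u₁ 0 1 with hM₁
  set J : Matrix (Fin m ⊕ Fin m) (Fin m ⊕ Fin m) ℝ := fromBlocks 0 1 (-1) 0 with hJ
  have ho' : k * kᵀ = 1 := mul_eq_one_comm.mp ho
  have hkJ : k * J * kᵀ = J := by
    rw [← fromBlocks_toBlocks k, hJ]
    simp only [fromBlocks_transpose, fromBlocks_multiply, mul_zero, mul_one, zero_add, add_zero,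
      mul_neg, neg_mul]
    congr 1
    · rw [h1]; abel
    · rw [← h3]; abel
    · rw [← transpose_one, ← h3]
      simp only [transpose_sub, transpose_mul, transpose_transpose]; abel
    · rw [h2]; abel
  have hJk : kᵀ * J * k = J := by
    conv_lhs => rw [← hkJ]
    calc kᵀ * (k * J * kᵀ) * k = (kᵀ * k) * J * (kᵀ * k) := by simp only [Matrix.mul_assoc]
      _ = J := by rw [ho, one_mul, mul_one]
  obtain ⟨C, hC, hCJ⟩ : ∃ C, k * M = M₁ * C ∧ C * J = J * C := by
    refine ⟨fromBlocks (k.toBlocks₂₁ * u + k.toBlocks₂₂) (-(k.toBlocks₂₁ * v))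
      (k.toBlocks₂₁ * v) (k.toBlocks₂₁ * u + k.toBlocks₂₂), ?_, ?_⟩
    · conv_lhs => rw [← fromBlocks_toBlocks k]
      rw [hM, hM₁]
      simp only [fromBlocks_multiply, mul_zero, mul_one, zero_add, add_zero,
        mul_neg, zero_mul, one_mul, neg_zero]
      congr 1
      · rw [e2]; abel
      · rw [e1]; abel
    · rw [hJ]
      simp only [fromBlocks_multiply, mul_zero, mul_one, zero_add, add_zero,
        mul_neg, neg_mul, zero_mul, one_mul, neg_neg, neg_zero]
  have main : P₁ * (J * k * M) = (k * P * kᵀ) * (J * k * M) := by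
    calc P₁ * (J * k * M) = P₁ * J * M₁ * C := by
          rw [Matrix.mul_assoc J, hC]; simp only [Matrix.mul_assoc]
      _ = M₁ * C * J := by rw [p₁, Matrix.mul_assoc, ← hCJ, Matrix.mul_assoc]
      _ = k * (P * J * M) := by rw [← hC, p, Matrix.mul_assoc]
      _ = k * (P * (kᵀ * J * k) * M) := by rw [hJk]
      _ = _ := by simp only [Matrix.mul_assoc]
  have hMu : IsUnit M := by
    rw [isUnit_iff_isUnit_det, hM, det_fromBlocks_zero₂₁, det_one, mul_one]
    exact hv.det_pos.ne'.isUnit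
  have hku : IsUnit k := .of_mul_eq_one _ ho'
  have hJu : IsUnit J := by
    refine .of_mul_eq_one (-J) ?_
    rw [hJ, mul_neg, fromBlocks_multiply, ← fromBlocks_one, fromBlocks_neg]
    simp
  exact ((hJu.mul hku).mul hMu).mul_right_cancel main

theorem conj_L {m : ℕ}
    (k L L₁ P P₁ : Matrix (Fin m ⊕ Fin m) (Fin m ⊕ Fin m) ℝ) (ho : kᵀ * k = 1)
    (hL : Lᵀ = L ∧ NormedSpace.exp L = P) (hL₁ : L₁ᵀ = L₁ ∧ NormedSpace.exp L₁ = P₁)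
    (h : P₁ = k * P * kᵀ) : L₁ = k * L * kᵀ := by
  have ho' : k * kᵀ = 1 := mul_eq_one_comm.mp ho
  have hi : k⁻¹ = kᵀ := inv_eq_left_inv ho
  apply exp_inj_symm _ _ hL₁.1
  · simp only [transpose_mul, transpose_transpose, hL.1, Matrix.mul_assoc]
  · rw [hL₁.2, h, ← hL.2, ← hi, exp_conj _ _ (.of_mul_eq_one _ ho')]

/-- second part of Proposition 1: the inner product
⟨x,y⟩_S = ⟨log(φ(x)φ(x)ᵀ), log(φ(y)φ(y)ᵀ)⟩ on SH_m is invariant under the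
action of the stabilizer K = Sp_{2m} ∩ O_{2m}. -/
theorem inner_product_K_invariance (m : ℕ) (hm : 1 ≤ m)
    (k : Matrix (Fin m ⊕ Fin m) (Fin m ⊕ Fin m) ℝ)
    (hk : inSp k ∧ kᵀ * k = 1)
    (u v u' v' : Matrix (Fin m) (Fin m) ℝ)
    (hu : uᵀ = u) (hv : v.PosDef) (hu' : u'ᵀ = u') (hv' : v'.PosDef)
    (x y : Matrix (Fin m) (Fin m) ℂ)
    (hx : x = u.map ((↑) : ℝ → ℂ) + Complex.I • v.map ((↑) : ℝ → ℂ))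
    (hy : y = u'.map ((↑) : ℝ → ℂ) + Complex.I • v'.map ((↑) : ℝ → ℂ))
    (r r' : Matrix (Fin m) (Fin m) ℝ)
    (hr : r.PosDef ∧ r * r = v) (hr' : r'.PosDef ∧ r' * r' = v')
    (u₁ v₁ u₂ v₂ : Matrix (Fin m) (Fin m) ℝ)
    (hu₁ : u₁ᵀ = u₁) (hv₁ : v₁.PosDef) (hu₂ : u₂ᵀ = u₂) (hv₂ : v₂.PosDef)
    (hkx : mobius k x = u₁.map ((↑) : ℝ → ℂ) + Complex.I • v₁.map ((↑) : ℝ → ℂ))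
    (hky : mobius k y = u₂.map ((↑) : ℝ → ℂ) + Complex.I • v₂.map ((↑) : ℝ → ℂ))
    (r₁ r₂ : Matrix (Fin m) (Fin m) ℝ)
    (hr₁ : r₁.PosDef ∧ r₁ * r₁ = v₁) (hr₂ : r₂.PosDef ∧ r₂ * r₂ = v₂)
    (Lx Ly L₁ L₂ : Matrix (Fin m ⊕ Fin m) (Fin m ⊕ Fin m) ℝ)
    (hLx : Lxᵀ = Lx ∧ NormedSpace.exp Lx = phiBlk u r * (phiBlk u r)ᵀ)
    (hLy : Lyᵀ = Ly ∧ NormedSpace.exp Ly = phiBlk u' r' * (phiBlk u' r')ᵀ)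
    (hL₁ : L₁ᵀ = L₁ ∧ NormedSpace.exp L₁ = phiBlk u₁ r₁ * (phiBlk u₁ r₁)ᵀ)
    (hL₂ : L₂ᵀ = L₂ ∧ NormedSpace.exp L₂ = phiBlk u₂ r₂ * (phiBlk u₂ r₂)ᵀ) :
    frobInner L₁ L₂ = frobInner Lx Ly := by
  have a₁ := conj_L k Lx L₁ _ _ hk.2 hLx hL₁
    (conj_P hm k hk u v hu hv x hx r hr u₁ v₁ hu₁ hv₁ hkx r₁ hr₁)
  have a₂ := conj_L k Ly L₂ _ _ hk.2 hLy hL₂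
    (conj_P hm k hk u' v' hu' hv' y hy r' hr' u₂ v₂ hu₂ hv₂ hky r₂ hr₂)
  unfold frobInner
  rw [hL₁.1, hLx.1, a₁, a₂]
  calc trace (k * Lx * kᵀ * (k * Ly * kᵀ)) = trace (k * (Lx * (kᵀ * k) * Ly * kᵀ)) := by
        simp only [Matrix.mul_assoc]
    _ = trace (Lx * Ly * (kᵀ * k)) := by
        rw [hk.2, mul_one, trace_mul_comm, Matrix.mul_assoc, hk.2]
    _ = trace (Lx * Ly) := by rw [hk.2, mul_one]
end

section
/- Let n ≥ 1 and let g, h be invertible n×n real matrices. Then ‖log(g^{-1} h hᵀ g^{-ᵀ})‖ = ‖log(P^{-1/2} Q P^{-1/2})‖, where P = g gᵀ, Q = h hᵀ, P^{-1/2} is the inverse of the unique symmetric positive definite square root of P, and ‖·‖ is the Frobenius norm; i.e., the quotient-structure norm ‖⊖x ⊕ y‖_S on the SPD manifold GL_n/O_n equals the affine-invariant Riemannian distance between g gᵀ and h hᵀ. -/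
open Matrix

open scoped Matrix.Norms.L2Operator in
lemma exp_symm_inj {n : ℕ} (A B : Matrix (Fin n) (Fin n) ℝ) (hA : Aᵀ = A) (hB : Bᵀ = B)
    (h : NormedSpace.exp A = NormedSpace.exp B) : A = B := by
  have hA' : IsSelfAdjoint A := by
    rw [IsSelfAdjoint, Matrix.star_eq_conjTranspose, Matrix.conjTranspose_eq_transpose_of_trivial, hA]
  have hB' : IsSelfAdjoint B := by
    rw [IsSelfAdjoint, Matrix.star_eq_conjTranspose, Matrix.conjTranspose_eq_transpose_of_trivial, hB]
  rw [← CFC.log_exp A hA', ← CFC.log_exp B hB', h]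

/-- for invertible real matrices g, h, the quotient-structure
norm ‖log(g⁻¹ h hᵀ g⁻ᵀ)‖ equals the affine-invariant Riemannian distance
‖log(P^{-1/2} Q P^{-1/2})‖ between P = g gᵀ and Q = h hᵀ, where S = P^{1/2}
is the unique symmetric positive definite square root of P. -/
theorem quotient_norm_eq_affine_invariant_distance (n : ℕ) (hn : 1 ≤ n)
    (g h : Matrix (Fin n) (Fin n) ℝ) (hg : IsUnit g) (hh : IsUnit h)
    (S : Matrix (Fin n) (Fin n) ℝ) (hS : S.PosDef ∧ S * S = g * gᵀ)
    (L₁ L₂ : Matrix (Fin n) (Fin n) ℝ)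
    (hL₁ : L₁ᵀ = L₁ ∧ NormedSpace.exp L₁ = g⁻¹ * (h * hᵀ) * (g⁻¹)ᵀ)
    (hL₂ : L₂ᵀ = L₂ ∧ NormedSpace.exp L₂ = S⁻¹ * (h * hᵀ) * S⁻¹) :
    frobNorm L₁ = frobNorm L₂ := by
  obtain ⟨hSp, hSS⟩ := hS
  obtain ⟨h1, e1⟩ := hL₁
  obtain ⟨h2, e2⟩ := hL₂
  have hSt : Sᵀ = S := by
    rw [← Matrix.conjTranspose_eq_transpose_of_trivial]; exact hSp.1
  have hgd : IsUnit g.det := (Matrix.isUnit_iff_isUnit_det g).1 hg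
  have hSd : IsUnit S.det := (Matrix.isUnit_iff_isUnit_det S).1 hSp.isUnit
  have hgtd : IsUnit gᵀ.det := by rwa [Matrix.det_transpose]
  set U := g⁻¹ * S with hU
  have hUt : Uᵀ = S * (g⁻¹)ᵀ := by rw [hU, Matrix.transpose_mul, hSt]
  have hUU : U * Uᵀ = 1 := by
    have : U * Uᵀ = g⁻¹ * (S * S) * (g⁻¹)ᵀ := by rw [hUt, hU]; simp only [Matrix.mul_assoc]
    rw [this, hSS, ← Matrix.mul_assoc, Matrix.nonsing_inv_mul _ hgd, Matrix.one_mul,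
      Matrix.transpose_nonsing_inv, Matrix.mul_nonsing_inv _ hgtd]
  have hUU' : Uᵀ * U = 1 := mul_eq_one_comm.1 hUU
  have hinv : U⁻¹ = Uᵀ := Matrix.inv_eq_right_inv hUU
  have hUu : IsUnit U := ⟨⟨U, Uᵀ, hUU, hUU'⟩, rfl⟩
  have key : L₁ = U * L₂ * Uᵀ := by
    apply exp_symm_inj _ _ h1
    · simp only [Matrix.transpose_mul, Matrix.transpose_transpose, h2, Matrix.mul_assoc]
    · rw [← hinv, Matrix.exp_conj U L₂ hUu, hinv, e1, e2, hUt, hU]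
      have a : g⁻¹ * S * (S⁻¹ * (h * hᵀ) * S⁻¹) * (S * (g⁻¹)ᵀ)
          = g⁻¹ * ((S * S⁻¹) * (h * hᵀ) * (S⁻¹ * S)) * (g⁻¹)ᵀ := by
        simp only [Matrix.mul_assoc]
      rw [a, Matrix.mul_nonsing_inv _ hSd, Matrix.nonsing_inv_mul _ hSd, Matrix.one_mul,
        Matrix.mul_one]
  unfold frobNorm
  congr 1
  rw [h1, h2, key]
  have b : U * L₂ * Uᵀ * (U * L₂ * Uᵀ) = U * (L₂ * (Uᵀ * U) * L₂ * Uᵀ) := by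
    simp only [Matrix.mul_assoc]
  rw [b, hUU', Matrix.trace_mul_comm, Matrix.mul_one, Matrix.mul_assoc, hUU', Matrix.mul_one]
end

section
/- Let m ≥ 1 and let S be a 2m×2m real symmetric positive definite matrix. Then S is symplectic (Sᵀ J S = J with J = [[0, I_m], [−I_m, 0]]) if and only if its principal logarithm V = log S is a symmetric matrix anticommuting with J, i.e., V J + J V = 0. In particular, the symmetric positive definite symplectic matrices are exactly the matrix exponentials of the linear subspace of symmetric matrices anticommuting with J. -/
open Matrix

/-- `J = [[0, I], [-I, 0]]`. -/
def Jmat (m : ℕ) : Matrix (Fin m ⊕ Fin m) (Fin m ⊕ Fin m) ℝ :=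
  Matrix.fromBlocks 0 1 (-1) 0

theorem Jmat_sq (m : ℕ) : Jmat m * Jmat m = -1 := by
  rw [← Matrix.fromBlocks_one, Matrix.fromBlocks_neg]
  simp only [Jmat, Matrix.fromBlocks_multiply]
  simp only [mul_zero, zero_mul, mul_one, zero_add, add_zero, neg_zero, mul_neg]

theorem Jmat_transpose (m : ℕ) : (Jmat m)ᵀ = -Jmat m := by
  simp [Jmat, Matrix.fromBlocks_transpose, Matrix.fromBlocks_neg]

/-- a symmetric positive definite 2m×2m matrix S is symplectic
iff its principal logarithm V (the unique symmetric matrix with exp V = S)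
anticommutes with J. -/
theorem spd_symplectic_iff_log_anticommutes (m : ℕ) (hm : 1 ≤ m)
    (S : Matrix (Fin m ⊕ Fin m) (Fin m ⊕ Fin m) ℝ) (hS : S.PosDef)
    (V : Matrix (Fin m ⊕ Fin m) (Fin m ⊕ Fin m) ℝ)
    (hV : Vᵀ = V ∧ NormedSpace.exp V = S) :
    Sᵀ * Jmat m * S = Jmat m ↔ V * Jmat m + Jmat m * V = 0 := by
  obtain ⟨hVt, hVS⟩ := hV
  have hSt : Sᵀ = S := by rw [← hVS, ← Matrix.exp_transpose, hVt]
  have hJ := Jmat_sq m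
  have hJt := Jmat_transpose m
  generalize Jmat m = J at *
  have hu : IsUnit S := hS.isUnit
  have hdet : IsUnit S.det := (Matrix.isUnit_iff_isUnit_det S).1 hu
  let u : (Matrix (Fin m ⊕ Fin m) (Fin m ⊕ Fin m) ℝ)ˣ :=
    ⟨J, -J, by simp [hJ], by simp [hJ]⟩
  have hconj : NormedSpace.exp (J * (-V) * (-J)) = J * S⁻¹ * (-J) := by
    have := Matrix.exp_units_conj u (-V)
    rw [Matrix.exp_neg, hVS] at this
    exact this
  rw [hSt]
  constructor
  · intro h
    have h1 : S * J = J * S⁻¹ := by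
      calc S * J = S * J * S * S⁻¹ := by rw [mul_assoc _ S, Matrix.mul_nonsing_inv _ hdet, mul_one]
        _ = _ := by rw [h]
    have h2 : V = J * (-V) * (-J) := by
      apply exp_inj_symm _ _ hVt
      · simp [Matrix.transpose_mul, hVt, hJt, mul_assoc]
      · rw [hconj, ← h1, hVS, mul_assoc]
        simp [hJ]
    have h3 : V * J = -(J * V) := by
      calc V * J = J * (-V) * (-J) * J := by rw [← h2]
        _ = _ := by simp [mul_assoc, hJ]
    rw [h3]; simp
  · intro h
    have h3 : J * V = -(V * J) := by rw [eq_neg_iff_add_eq_zero, add_comm]; exact h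
    have h2 : J * (-V) * (-J) = V := by
      rw [mul_neg J V, h3]; simp [mul_assoc, hJ]
    rw [h2, hVS] at hconj
    have h1 : S * J = J * S⁻¹ := by
      calc S * J = J * S⁻¹ * (-J) * J := by rw [← hconj]
        _ = _ := by simp [mul_assoc, hJ]
    rw [h1, mul_assoc, Matrix.nonsing_inv_mul _ hdet, mul_one]
end

section
/- Let m ≥ 1 and let x, a, p ∈ SH_m with x ≠ p and a ≠ iI_m. Write A = log(φ(a) φ(a)ᵀ) and, for q ∈ SH_m, M(q) = log(φ(p)^{-1} φ(q) φ(q)ᵀ φ(p)^{-ᵀ}). Let the hyperplane be H = { q ∈ SH_m : ⟨M(q), A⟩ = 0 }, and let C = sup { ⟨M(q), M(x)⟩ / (‖M(q)‖ ‖M(x)‖) : q ∈ H, q ≠ p }, the supremum of gyrocosines between ⊖p ⊕ q and ⊖p ⊕ x over q in the hyperplane. Then sqrt(1 − C²) · ‖M(x)‖ = |⟨M(x), A⟩| / ‖A‖; i.e., the distance from x to the hyperplane H_{a,p} equals |⟨log(φ(p)^{-1} φ(x) φ(x)ᵀ φ(p)^{-ᵀ}), log(φ(a) φ(a)ᵀ)⟩|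 / ‖log(φ(a) φ(a)ᵀ)‖. (Theorem 1.) -/
open Matrix

/-- Real part of a complex matrix. -/
def rePart {n : ℕ} (x : Matrix (Fin n) (Fin n) ℂ) : Matrix (Fin n) (Fin n) ℝ :=
  Matrix.of fun i j => (x i j).re

/-- Imaginary part of a complex matrix. -/
def imPart {n : ℕ} (x : Matrix (Fin n) (Fin n) ℂ) : Matrix (Fin n) (Fin n) ℝ :=
  Matrix.of fun i j => (x i j).im

open scoped Classical in
/-- The unique symmetric positive definite square root (when it exists). -/
noncomputable def spdSqrt {n : ℕ} (v : Matrix (Fin n) (Fin n) ℝ) :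
    Matrix (Fin n) (Fin n) ℝ :=
  if h : ∃ r : Matrix (Fin n) (Fin n) ℝ, r.PosDef ∧ r * r = v then h.choose else 0

open scoped Classical in
/-- The principal matrix logarithm: the unique symmetric matrix whose matrix
exponential is the given symmetric positive definite matrix. -/
noncomputable def spdLog {n : Type*} [Fintype n] [DecidableEq n]
    (P : Matrix n n ℝ) : Matrix n n ℝ :=
  if h : ∃ L : Matrix n n ℝ, Lᵀ = L ∧ NormedSpace.exp L = P then h.choose else 0

/-- The representative φ(x) = [[v^{1/2}, u v^{-1/2}], [0, v^{-1/2}]] of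
x = u + iv. -/
noncomputable def phiMap {n : ℕ} (x : Matrix (Fin n) (Fin n) ℂ) :
    Matrix (Fin n ⊕ Fin n) (Fin n ⊕ Fin n) ℝ :=
  Matrix.fromBlocks (spdSqrt (imPart x)) (rePart x * (spdSqrt (imPart x))⁻¹)
    0 (spdSqrt (imPart x))⁻¹

/-- M(q) = log(φ(p)⁻¹ φ(q) φ(q)ᵀ φ(p)⁻ᵀ). -/
noncomputable def Mlog {m : ℕ} (p q : Matrix (Fin m) (Fin m) ℂ) :
    Matrix (Fin m ⊕ Fin m) (Fin m ⊕ Fin m) ℝ :=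
  spdLog ((phiMap p)⁻¹ * phiMap q * (phiMap q)ᵀ * ((phiMap p)⁻¹)ᵀ)


section aux
variable {n : Type*} [Fintype n] [DecidableEq n]

open scoped Matrix.Norms.L2Operator MatrixOrder in
lemma spd_exp_inj {L K : Matrix n n ℝ} (hL : Lᵀ = L) (hK : Kᵀ = K)
    (h : NormedSpace.exp L = NormedSpace.exp K) : L = K := by
  have hL' : IsSelfAdjoint L := by
    rw [IsSelfAdjoint, Matrix.star_eq_conjTranspose, Matrix.conjTranspose_eq_transpose_of_trivial, hL]
  have hK' : IsSelfAdjoint K := by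
    rw [IsSelfAdjoint, Matrix.star_eq_conjTranspose, Matrix.conjTranspose_eq_transpose_of_trivial, hK]
  rw [← CFC.log_exp L hL', ← CFC.log_exp K hK', h]

open scoped Matrix.Norms.L2Operator MatrixOrder in
lemma spd_log_exists {P : Matrix n n ℝ} (hP : P.PosDef) :
    ∃ L : Matrix n n ℝ, Lᵀ = L ∧ NormedSpace.exp L = P := by
  refine ⟨CFC.log P, ?_, CFC.exp_log P hP.isStrictlyPositive⟩
  have h : IsSelfAdjoint (CFC.log P) := .log
  rwa [IsSelfAdjoint, Matrix.star_eq_conjTranspose,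
    Matrix.conjTranspose_eq_transpose_of_trivial] at h

lemma spdLog_exp {L : Matrix n n ℝ} (hL : Lᵀ = L) : spdLog (NormedSpace.exp L) = L := by
  have h : ∃ K : Matrix n n ℝ, Kᵀ = K ∧ NormedSpace.exp K = NormedSpace.exp L := ⟨L, hL, rfl⟩
  rw [spdLog, dif_pos h]
  exact spd_exp_inj h.choose_spec.1 hL h.choose_spec.2

lemma spdLog_spec {P : Matrix n n ℝ} (hP : P.PosDef) :
    (spdLog P)ᵀ = spdLog P ∧ NormedSpace.exp (spdLog P) = P := by
  obtain ⟨L, hL, rfl⟩ := spd_log_exists hP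
  rw [spdLog_exp hL]; exact ⟨hL, rfl⟩

lemma posDef_mul_transpose {B : Matrix n n ℝ} (hB : IsUnit B) : (B * Bᵀ).PosDef := by
  have := (Matrix.IsUnit.posDef_star_right_conjugate_iff (x := (1 : Matrix n n ℝ)) hB).2 PosDef.one
  simpa [Matrix.star_eq_conjTranspose] using this

lemma exp_half_mul (L : Matrix n n ℝ) :
    NormedSpace.exp ((1/2 : ℝ) • L) * NormedSpace.exp ((1/2 : ℝ) • L) = NormedSpace.exp L := by
  rw [← Matrix.exp_add_of_commute _ _ (Commute.refl _), ← add_smul]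
  norm_num

lemma exp_posDef {L : Matrix n n ℝ} (hL : Lᵀ = L) : (NormedSpace.exp L).PosDef := by
  have := posDef_mul_transpose (Matrix.isUnit_exp ((1/2 : ℝ) • L))
  rwa [← Matrix.exp_transpose, Matrix.transpose_smul, hL, exp_half_mul] at this

lemma spdLog_symplectic {l : Type*} [Fintype l] [DecidableEq l]
    {P : Matrix (l ⊕ l) (l ⊕ l) ℝ} (hP : P.PosDef) (hs : P ∈ symplecticGroup l ℝ) :
    J l ℝ * spdLog P * J l ℝ = spdLog P := by
  obtain ⟨h1, h2⟩ := spdLog_spec hP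
  have hT : Pᵀ = P := by rw [← h2, ← Matrix.exp_transpose, h1]
  rw [SymplecticGroup.mem_iff, hT] at hs
  have hinv : P⁻¹ = -(J l ℝ * P * J l ℝ) := by
    apply Matrix.inv_eq_right_inv
    rw [mul_neg, ← mul_assoc, ← mul_assoc, hs, J_squared, neg_neg]
  have hJ : IsUnit (J l ℝ) := (Matrix.isUnit_iff_isUnit_det _).2 (isUnit_det_J l ℝ)
  have := Matrix.exp_conj (J l ℝ) (spdLog P) hJ
  rw [h2, J_inv, mul_neg, mul_neg, ← hinv] at this
  have h3 : NormedSpace.exp (-(J l ℝ * spdLog P * J l ℝ)) = NormedSpace.exp (-spdLog P) := by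
    rw [this, Matrix.exp_neg, h2]
  have := spd_exp_inj (by simp [Matrix.transpose_mul, h1, J_transpose, mul_assoc]) (by simp [h1]) h3
  exact neg_injective this

lemma exp_symplectic {l : Type*} [Fintype l] [DecidableEq l]
    {L : Matrix (l ⊕ l) (l ⊕ l) ℝ} (h1 : Lᵀ = L) (hL : J l ℝ * L * J l ℝ = L) :
    NormedSpace.exp L ∈ symplecticGroup l ℝ := by
  rw [SymplecticGroup.mem_iff, ← Matrix.exp_transpose, h1]
  have hJ : IsUnit (J l ℝ) := (Matrix.isUnit_iff_isUnit_det _).2 (isUnit_det_J l ℝ)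
  have := Matrix.exp_conj (J l ℝ) L hJ
  rw [J_inv, mul_neg, mul_neg, hL, Matrix.exp_neg] at this
  have h2 : NormedSpace.exp L * (NormedSpace.exp L)⁻¹ = 1 :=
    Matrix.mul_nonsing_inv _ ((Matrix.isUnit_iff_isUnit_det _).1 (Matrix.isUnit_exp L))
  rw [this, mul_neg] at h2
  have h3 := congrArg (· * J l ℝ) h2
  simp only [neg_mul, mul_assoc, J_squared, mul_neg, mul_one, one_mul, neg_neg] at h3
  rw [mul_assoc]; exact h3

end aux

lemma spdSqrt_spec {n : ℕ} {v : Matrix (Fin n) (Fin n) ℝ} (hv : v.PosDef) :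
    (spdSqrt v).PosDef ∧ spdSqrt v * spdSqrt v = v := by
  have h : ∃ r : Matrix (Fin n) (Fin n) ℝ, r.PosDef ∧ r * r = v := by
    obtain ⟨L, hL, rfl⟩ := spd_log_exists hv
    exact ⟨_, exp_posDef (by rw [Matrix.transpose_smul, hL]), exp_half_mul L⟩
  rw [spdSqrt, dif_pos h]
  exact h.choose_spec

lemma rePart_mk {n : ℕ} (u v : Matrix (Fin n) (Fin n) ℝ) :
    rePart (u.map ((↑) : ℝ → ℂ) + Complex.I • v.map ((↑) : ℝ → ℂ)) = u := by
  ext i j; simp [rePart]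

lemma imPart_mk {n : ℕ} (u v : Matrix (Fin n) (Fin n) ℝ) :
    imPart (u.map ((↑) : ℝ → ℂ) + Complex.I • v.map ((↑) : ℝ → ℂ)) = v := by
  ext i j; simp [imPart]

lemma PosDef_T {n : Type*} [Fintype n] {v : Matrix n n ℝ} (hv : v.PosDef) : vᵀ = v := by
  have := hv.isHermitian
  rwa [Matrix.IsHermitian, Matrix.conjTranspose_eq_transpose_of_trivial] at this

lemma phi_mem {n : ℕ} {x : Matrix (Fin n) (Fin n) ℂ} (hx : inSH x) :
    phiMap x ∈ symplecticGroup (Fin n) ℝ := by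
  obtain ⟨u, v, hu, hv, rfl⟩ := hx
  rw [phiMap, rePart_mk, imPart_mk]
  obtain ⟨hr, -⟩ := spdSqrt_spec hv
  set r := spdSqrt v
  have hT := PosDef_T hr
  have hd : IsUnit r.det := (Matrix.isUnit_iff_isUnit_det _).1 hr.isUnit
  have hTi : (r⁻¹)ᵀ = r⁻¹ := by rw [Matrix.transpose_nonsing_inv, hT]
  rw [SymplecticGroup.mem_iff, Matrix.fromBlocks_transpose, J, Matrix.fromBlocks_multiply,
    Matrix.fromBlocks_multiply]
  have e : r * (r⁻¹ * u) = u := by rw [← mul_assoc, Matrix.mul_nonsing_inv _ hd, one_mul]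
  simp [hT, hTi, hu, mul_assoc, Matrix.mul_nonsing_inv _ hd, Matrix.nonsing_inv_mul _ hd, e]

lemma phi_mul_mk {n : ℕ} {u v : Matrix (Fin n) (Fin n) ℝ} (hu : uᵀ = u) (hv : v.PosDef) :
    phiMap (u.map ((↑) : ℝ → ℂ) + Complex.I • v.map ((↑) : ℝ → ℂ)) *
      (phiMap (u.map ((↑) : ℝ → ℂ) + Complex.I • v.map ((↑) : ℝ → ℂ)))ᵀ =
    Matrix.fromBlocks (v + u * v⁻¹ * u) (u * v⁻¹) (v⁻¹ * u) v⁻¹ := by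
  rw [phiMap, rePart_mk, imPart_mk]
  obtain ⟨hr, hrr⟩ := spdSqrt_spec hv
  set r := spdSqrt v
  have hT := PosDef_T hr
  have hTi : (r⁻¹)ᵀ = r⁻¹ := by rw [Matrix.transpose_nonsing_inv, hT]
  have hi : r⁻¹ * r⁻¹ = v⁻¹ := by rw [← hrr, Matrix.mul_inv_rev]
  rw [Matrix.fromBlocks_transpose, Matrix.fromBlocks_multiply]
  simp [hT, hTi, hu, mul_assoc, hrr, ← hi]

lemma exists_phi {n : ℕ} {Q : Matrix (Fin n ⊕ Fin n) (Fin n ⊕ Fin n) ℝ} (hQ : Q.PosDef)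
    (hs : Q ∈ symplecticGroup (Fin n) ℝ) : ∃ q, inSH q ∧ phiMap q * (phiMap q)ᵀ = Q := by
  have hT := PosDef_T hQ
  rw [SymplecticGroup.mem_iff, hT] at hs
  have hD : (Q.toBlocks₂₂).PosDef := hQ.submatrix (e := Sum.inr) Sum.inr_injective
  obtain ⟨E, F, G, D, rfl⟩ : ∃ E F G D, Q = Matrix.fromBlocks E F G D :=
    ⟨_, _, _, _, (Matrix.fromBlocks_toBlocks Q).symm⟩
  rw [Matrix.toBlocks_fromBlocks₂₂] at hD
  rw [Matrix.fromBlocks_transpose, Matrix.fromBlocks_inj] at hT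
  obtain ⟨-, hG, hF, hDT⟩ := hT
  rw [J, Matrix.fromBlocks_multiply, Matrix.fromBlocks_multiply, Matrix.fromBlocks_inj] at hs
  obtain ⟨-, h12, -, h22⟩ := hs
  simp only [mul_zero, mul_one, zero_add, add_zero, mul_neg, neg_mul] at h12 h22
  have hd : IsUnit D.det := (Matrix.isUnit_iff_isUnit_det _).1 hD.isUnit
  have e1 := Matrix.mul_nonsing_inv _ hd
  have e2 := Matrix.nonsing_inv_mul _ hd
  have h22' : D * F = G * D := by
    exact eq_of_sub_eq_zero (by rw [← h22]; abel)
  have hsym : D⁻¹ * G = F * D⁻¹ := by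
    calc D⁻¹ * G = D⁻¹ * (G * D) * D⁻¹ := by rw [mul_assoc, mul_assoc, e1, mul_one]
      _ = F * D⁻¹ := by rw [← h22', ← mul_assoc, e2, one_mul]
  have hE : E * D = 1 + F * F := by
    have : E * D - F * F = 1 := by rw [← neg_inj, ← h12]; abel
    rw [← this]; abel
  have hu : (F * D⁻¹)ᵀ = F * D⁻¹ := by
    rw [Matrix.transpose_mul, Matrix.transpose_nonsing_inv, hDT, ← hsym, ← hF]
  refine ⟨_, ⟨F * D⁻¹, D⁻¹, hu, hD.inv, rfl⟩, ?_⟩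
  rw [phi_mul_mk hu hD.inv, Matrix.nonsing_inv_nonsing_inv _ hd]
  congr 1
  · rw [mul_assoc F, e2, mul_one, ← mul_assoc, ← one_mul D⁻¹, ← mul_assoc, ← add_mul, mul_one, ← hE, mul_assoc, e1, mul_one]
  · rw [mul_assoc, e2, mul_one]
  · rw [← hsym, ← mul_assoc, e1, one_mul]

lemma symp_unit {n : ℕ} {B : Matrix (Fin n ⊕ Fin n) (Fin n ⊕ Fin n) ℝ}
    (h : B ∈ symplecticGroup (Fin n) ℝ) : IsUnit B :=
  (Matrix.isUnit_iff_isUnit_det _).2 (SymplecticGroup.symplectic_det h)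

lemma symp_inv {n : ℕ} {B : Matrix (Fin n ⊕ Fin n) (Fin n ⊕ Fin n) ℝ}
    (h : B ∈ symplecticGroup (Fin n) ℝ) : B⁻¹ ∈ symplecticGroup (Fin n) ℝ := by
  rw [← SymplecticGroup.coe_inv' ⟨B, h⟩]
  exact Subtype.property _

/-- tangent space predicate -/
def inTan {n : ℕ} (L : Matrix (Fin n ⊕ Fin n) (Fin n ⊕ Fin n) ℝ) : Prop :=
  Lᵀ = L ∧ J (Fin n) ℝ * L * J (Fin n) ℝ = L

lemma inTan_log {n : ℕ} {B : Matrix (Fin n ⊕ Fin n) (Fin n ⊕ Fin n) ℝ}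
    (h : B ∈ symplecticGroup (Fin n) ℝ) : inTan (spdLog (B * Bᵀ)) := by
  have hp := posDef_mul_transpose (symp_unit h)
  exact ⟨(spdLog_spec hp).1, spdLog_symplectic hp (mul_mem h (SymplecticGroup.transpose_mem h))⟩

lemma inTan_Mlog {n : ℕ} {p x : Matrix (Fin n) (Fin n) ℂ} (hp : inSH p) (hx : inSH x) :
    inTan (Mlog p x) := by
  have := inTan_log (mul_mem (symp_inv (phi_mem hp)) (phi_mem hx))
  rw [Matrix.transpose_mul] at this
  simpa only [Mlog, mul_assoc] using this

lemma exists_Mlog {n : ℕ} {p : Matrix (Fin n) (Fin n) ℂ} (hp : inSH p)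
    {Z : Matrix (Fin n ⊕ Fin n) (Fin n ⊕ Fin n) ℝ} (hZ : inTan Z) :
    ∃ q, inSH q ∧ Mlog p q = Z := by
  have hs := phi_mem hp
  have hE := exp_symplectic hZ.1 hZ.2
  have hpd : (phiMap p * NormedSpace.exp Z * (phiMap p)ᵀ).PosDef := by
    have := (Matrix.IsUnit.posDef_star_right_conjugate_iff (symp_unit hs)).2 (exp_posDef hZ.1)
    rwa [Matrix.star_eq_conjTranspose, Matrix.conjTranspose_eq_transpose_of_trivial] at this
  obtain ⟨q, hq, hqe⟩ := exists_phi hpd (mul_mem (mul_mem hs hE) (SymplecticGroup.transpose_mem hs))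
  refine ⟨q, hq, ?_⟩
  have hd := SymplecticGroup.symplectic_det hs
  have e2 := Matrix.nonsing_inv_mul _ hd
  rw [Mlog, mul_assoc _ (phiMap q), hqe, mul_assoc, mul_assoc, ← Matrix.transpose_mul, e2,
    Matrix.transpose_one, mul_one, ← mul_assoc, e2, one_mul]
  exact spdLog_exp hZ.1

lemma Mlog_self {n : ℕ} {p : Matrix (Fin n) (Fin n) ℂ} (hp : inSH p) : Mlog p p = 0 := by
  have e2 := Matrix.nonsing_inv_mul _ (SymplecticGroup.symplectic_det (phi_mem hp))
  rw [Mlog, e2, one_mul, ← Matrix.transpose_mul, e2, Matrix.transpose_one, ← NormedSpace.exp_zero]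
  exact spdLog_exp Matrix.transpose_zero

lemma inTan_sub_smul {n : ℕ} {X A : Matrix (Fin n ⊕ Fin n) (Fin n ⊕ Fin n) ℝ}
    (hX : inTan X) (hA : inTan A) (t : ℝ) : inTan (X - t • A) := by
  refine ⟨by simp [hX.1, hA.1], ?_⟩
  rw [mul_sub, sub_mul, Matrix.mul_smul, Matrix.smul_mul, hX.2, hA.2]

section frob
variable {n : Type*} [Fintype n]

lemma fi_comm (A B : Matrix n n ℝ) : frobInner A B = frobInner B A := by
  rw [frobInner, ← Matrix.trace_transpose, Matrix.transpose_mul, Matrix.transpose_transpose, frobInner]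

lemma fi_sub_smul (Y X A : Matrix n n ℝ) (t : ℝ) :
    frobInner Y (X - t • A) = frobInner Y X - t * frobInner Y A := by
  simp [frobInner, mul_sub, Matrix.trace_sub, Matrix.trace_smul]

lemma fi_nonneg (A : Matrix n n ℝ) : 0 ≤ frobInner A A := by
  rw [frobInner, Matrix.trace]
  refine Finset.sum_nonneg fun i _ => ?_
  rw [Matrix.diag_apply, Matrix.mul_apply]
  exact Finset.sum_nonneg fun j _ => mul_self_nonneg _

lemma fi_pos {A : Matrix n n ℝ} (h : A ≠ 0) : 0 < frobInner A A := by
  refine lt_of_le_of_ne (fi_nonneg A) fun h0 => h ?_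
  exact Matrix.trace_conjTranspose_mul_self_eq_zero_iff.1
    (by rw [Matrix.conjTranspose_eq_transpose_of_trivial]; exact h0.symm)

lemma fn_eq (A : Matrix n n ℝ) : frobNorm A = Real.sqrt (frobInner A A) := rfl

lemma fn_sq (A : Matrix n n ℝ) : frobNorm A ^ 2 = frobInner A A := Real.sq_sqrt (fi_nonneg A)

lemma fi_le (A B : Matrix n n ℝ) : frobInner A B ≤ frobNorm A * frobNorm B := by
  by_cases hB : B = 0
  · subst hB; simp [frobInner, frobNorm]
  have hp := fi_pos hB
  set t := frobInner A B / frobInner B B with ht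
  have h := fi_nonneg (A - t • B)
  rw [fi_sub_smul, fi_comm _ A, fi_comm _ B, fi_sub_smul, fi_sub_smul, fi_comm B A] at h
  have htB : t * frobInner B B = frobInner A B := div_mul_cancel₀ _ hp.ne'
  rw [fn_eq, fn_eq, ← Real.sqrt_mul (fi_nonneg A)]
  apply Real.le_sqrt_of_sq_le
  have : t * frobInner A B ≤ frobInner A A := by rw [htB] at h; linarith
  calc frobInner A B ^ 2 = (t * frobInner A B) * frobInner B B := by
        rw [mul_right_comm, htB, sq]
    _ ≤ _ := mul_le_mul_of_nonneg_right this hp.le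
end frob

/-- Theorem 1: the distance from x to the hyperplane H_{a,p},
computed via the supremum of gyrocosines, equals
|⟨log(φ(p)⁻¹ φ(x) φ(x)ᵀ φ(p)⁻ᵀ), log(φ(a) φ(a)ᵀ)⟩| / ‖log(φ(a) φ(a)ᵀ)‖. -/
theorem point_to_hyperplane_distance (m : ℕ) (hm : 1 ≤ m)
    (x a p : Matrix (Fin m) (Fin m) ℂ)
    (hx : inSH x) (ha : inSH a) (hp : inSH p)
    (hxp : x ≠ p) (hai : a ≠ Complex.I • (1 : Matrix (Fin m) (Fin m) ℂ)) :
    Real.sqrt (1 -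
        (sSup {c : ℝ | ∃ q : Matrix (Fin m) (Fin m) ℂ, inSH q ∧
          frobInner (Mlog p q) (spdLog (phiMap a * (phiMap a)ᵀ)) = 0 ∧ q ≠ p ∧
          c = frobInner (Mlog p q) (Mlog p x) /
              (frobNorm (Mlog p q) * frobNorm (Mlog p x))}) ^ 2) *
      frobNorm (Mlog p x)
    = |frobInner (Mlog p x) (spdLog (phiMap a * (phiMap a)ᵀ))| /
        frobNorm (spdLog (phiMap a * (phiMap a)ᵀ)) := by
  have hXt := inTan_Mlog hp hx
  have hAt := inTan_log (phi_mem ha)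
  set X := Mlog p x with hX
  set A := spdLog (phiMap a * (phiMap a)ᵀ) with hA
  by_cases hX0 : X = 0
  · rw [hX0]; simp [frobInner, frobNorm]
  have hXp := fi_pos hX0
  have hXn : 0 < frobNorm X := Real.sqrt_pos.2 hXp
  set t := frobInner X A / frobInner A A with ht
  set Z := X - t • A with hZ
  have hZt : inTan Z := inTan_sub_smul hXt hAt t
  have htA : t * frobInner A A = frobInner X A := by
    by_cases hA0 : A = 0
    · rw [hA0]; simp [frobInner]
    · exact div_mul_cancel₀ _ (fi_pos hA0).ne'
  have hZA : frobInner Z A = 0 := by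
    rw [fi_comm, hZ, fi_sub_smul, htA, fi_comm A X, sub_self]
  have hZX : frobInner Z X = frobInner Z Z := by
    conv_rhs => rw [hZ, fi_sub_smul, ← hZ, hZA]
    ring
  have hub : ∀ Y, frobInner Y A = 0 →
      frobInner Y X / (frobNorm Y * frobNorm X) ≤ frobNorm Z / frobNorm X := by
    intro Y hY
    have h1 : frobInner Y X = frobInner Y Z := by rw [hZ, fi_sub_smul, hY]; ring
    rw [h1, ← div_div]
    refine div_le_div_of_nonneg_right ?_ hXn.le
    exact div_le_of_le_mul₀ (Real.sqrt_nonneg _) (Real.sqrt_nonneg _)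
      ((fi_le Y Z).trans_eq (mul_comm _ _))
  have hsup : sSup {c : ℝ | ∃ q : Matrix (Fin m) (Fin m) ℂ, inSH q ∧
          frobInner (Mlog p q) A = 0 ∧ q ≠ p ∧
          c = frobInner (Mlog p q) X / (frobNorm (Mlog p q) * frobNorm X)} =
      frobNorm Z / frobNorm X := by
    by_cases hZ0 : Z = 0
    · have h0 : ∀ Y, frobInner Y A = 0 → frobInner Y X = 0 := by
        intro Y hY
        have : frobInner Y Z = frobInner Y X := by rw [hZ, fi_sub_smul, hY]; ring
        rw [← this, hZ0]; simp [frobInner]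
      rw [hZ0]
      have : frobNorm (0 : Matrix (Fin m ⊕ Fin m) (Fin m ⊕ Fin m) ℝ) = 0 := by simp [frobNorm]
      rw [this, zero_div]
      apply le_antisymm
      · apply Real.sSup_nonpos
        rintro c ⟨q, -, h, -, rfl⟩
        rw [h0 _ h, zero_div]
      · apply Real.sSup_nonneg
        rintro c ⟨q, -, h, -, rfl⟩
        rw [h0 _ h, zero_div]
    · obtain ⟨q, hq, hqZ⟩ := exists_Mlog hp hZt
      apply IsGreatest.csSup_eq
      constructor
      · refine ⟨q, hq, by rw [hqZ, hZA], ?_, ?_⟩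
        · rintro rfl
          exact hZ0 (by rw [← hqZ, Mlog_self hp])
        · have hZn : frobNorm Z ≠ 0 := (Real.sqrt_pos.2 (fi_pos hZ0)).ne'
          rw [hqZ, hZX, ← fn_sq]
          field_simp
      · rintro c ⟨q, -, h, -, rfl⟩
        exact hub _ h
  rw [hsup, fn_eq X, ← Real.sqrt_mul' _ hXp.le, ← fn_eq X, div_pow, fn_sq, fn_sq, sub_mul,
    div_mul_cancel₀ _ hXp.ne', one_mul, ← hZX, fi_comm Z X, hZ, fi_sub_smul, sub_sub_cancel]
  by_cases hA0 : A = 0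
  · rw [hA0]; simp [frobInner]
  have hAp := fi_pos hA0
  rw [fn_eq A, ← Real.sqrt_sq_eq_abs, ← Real.sqrt_div (sq_nonneg _), ht, sq]
  congr 1
  ring
end
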